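/- Every finitely generated subgroup of M(Ψ) is finitely presented; that is, M(Ψ) is coherent. -/

import Mathlib

/-- Given `J ⊆ I`, the free factor `F = ⟨e_j : j ∈ J⟩` of the free group `G` on `I`. -/
def freeFactor {I : Type} (J : Set I) : Subgroup (FreeGroup I) :=
  Subgroup.closure (FreeGroup.of '' J)

/-- The relators `t e_j t⁻¹ Ψ(e_j)⁻¹ (j ∈ J)` of the mapping torus `M(Ψ)` of an injective
homomorphism `Ψ : F → G` from the free factor `F = ⟨e_j : j ∈ J⟩` of the free group `G` on `I`;
the generator `none` plays the role of the stable letter `t`. -/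
def mtRelsRel {I : Type} (J : Set I) (Ψ : freeFactor J →* FreeGroup I) :
    Set (FreeGroup (Option I)) :=
  Set.range fun j : J =>
    FreeGroup.of (none : Option I) * FreeGroup.of (some (j : I)) *
      (FreeGroup.of (none : Option I))⁻¹ *
      (FreeGroup.map some
        (Ψ ⟨FreeGroup.of (j : I),
          Subgroup.subset_closure (Set.mem_image_of_mem _ j.2)⟩))⁻¹

/-- The mapping torus `M(Ψ) = ⟨t, eᵢ (i ∈ I) | t e_j t⁻¹ Ψ(e_j)⁻¹ (j ∈ J)⟩`, i.e. the HNN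
extension `G ∗_F` with bonding maps the inclusion of `F` into `G` and `Ψ`. -/
abbrev MTRel {I : Type} (J : Set I) (Ψ : freeFactor J →* FreeGroup I) : Type :=
  PresentedGroup (mtRelsRel J Ψ)

/-- A group is finitely presented if it is isomorphic to the quotient of a finitely
generated free group by the normal closure of a finite set of relators. -/
def FinitelyPresented (G : Type) [Group G] : Prop :=
  ∃ (n : ℕ) (rels : Set (FreeGroup (Fin n))),
    rels.Finite ∧ Nonempty (PresentedGroup rels ≃* G)

/-!
The mapping torus is a retract of an ascending HNN extension `E = ⟨τ, F | τ x τ⁻¹ = Θ x⟩` of a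
larger free group `F`, by a retraction killing `τ`. Hence it suffices to show that a finitely
generated subgroup `H` of `E` containing `τ` is finitely presented.

The group `K = H ∩ F` satisfies `Θ K ≤ K`, and `H` is generated by `τ` and a finitely generated
`B₀ ≤ K`. Among the pairs `A ≤ B` of finitely generated subgroups with `B₀ ≤ B ≤ K` and
`Θ A ≤ B`, choose one for which `B` is generated by `A` and as few further elements
`c₁, …, c_k` as possible. As in Feighn and Handel's proof that mapping tori of free group
endomorphisms are coherent, folding a pair of graphs representing `A ≤ B` shows that `B` is the
free product of `A` and the free group on the `cᵢ`: minimality of `k` excludes every fold that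
would lower the relative rank. A fold that identifies two vertices of the smaller graph through an
edge outside it enlarges `A` by some `l`; adjoining `Θ l` to `B` gives again a minimal pair, which
is free by induction, and the Hopf property of finitely generated free groups lets one exchange
`Θ l` for `l` and carry freeness back. Minimality persists along the tower `A ≤ B ≤ ⟨B, Θ B⟩ ≤ ⋯`,
so a basis of `A` together with all `Θʲ cᵢ` is a basis of the union of the tower. Therefore `H` is
presented by `τ`, the basis of `A` and the `cᵢ`, with one relator for each basis element of `A`.
-/

universe u v w

namespace MappingTorus

open Function Monoid.Coprod

/-! ### Residual finiteness and the Hopf property -/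

theorem exists_perm_of_biUnique_of_finite {V : Type*} [Finite V] {R : V → V → Prop}
    (hR : Relator.BiUnique R) : ∃ σ : Equiv.Perm V, ∀ a b, R a b → σ a = b := by
  classical
  let f : {a // ∃ b, R a b} → V := fun a => a.2.choose
  have hf (a b : V) (hab : R a b) : f ⟨a, b, hab⟩ = b :=
    hR.2 (Exists.choose_spec (⟨b, hab⟩ : ∃ b, R a b)) hab
  have hf_inj : Injective f := by
    rintro ⟨a, b, hab⟩ ⟨a', b', hab'⟩ h
    rw [hf a b hab, hf a' b' hab'] at h
    subst h
    exact Subtype.ext (hR.1 hab hab')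
  have := Fintype.ofFinite V
  refine ⟨(Equiv.ofInjective f hf_inj).extendSubtype, fun a b hab => ?_⟩
  rw [Equiv.extendSubtype_apply_of_mem _ a ⟨b, hab⟩]
  exact hf a b hab

theorem exists_perm_of_biUnique {V : Type*} {R : V → V → Prop} (hR : Relator.BiUnique R)
    {S : Set V} (hS : S.Finite) (hRS : ∀ a b, R a b → a ∈ S ∧ b ∈ S) :
    ∃ σ : Equiv.Perm V, ∀ a b, R a b → σ a = b := by
  classical
  have : Finite S := hS
  obtain ⟨σ, hσ⟩ := exists_perm_of_biUnique_of_finite (V := S) (R := fun a b => R a b)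
    ⟨fun _ _ _ h h' => Subtype.ext (hR.1 h h'), fun _ _ _ h h' => Subtype.ext (hR.2 h h')⟩
  refine ⟨Equiv.Perm.ofSubtype σ, fun a b hab => ?_⟩
  obtain ⟨ha, hb⟩ := hRS a b hab
  rw [Equiv.Perm.ofSubtype_apply_of_mem σ ha, hσ ⟨a, ha⟩ ⟨b, hb⟩ hab]

theorem exists_perm_extending_mul_left {α : Type*} (S : Set (FreeGroup α)) [Finite S] :
    ∃ σ : α → Equiv.Perm S, ∀ (x : α × Bool) (a b : S),
      FreeGroup.mk [x] * a.1 = b.1 → FreeGroup.lift σ (FreeGroup.mk [x]) a = b := by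
  have exists_perm (x : α) :
      ∃ σ : Equiv.Perm S, ∀ a b : S, FreeGroup.of x * a.1 = b.1 → σ a = b :=
    exists_perm_of_biUnique_of_finite
      ⟨fun _ _ _ h h' => Subtype.ext (mul_left_cancel (h.trans h'.symm)),
        fun _ _ _ h h' => Subtype.ext (h.symm.trans h')⟩
  choose σ hσ using exists_perm
  refine ⟨σ, ?_⟩
  rintro ⟨x, _ | _⟩ a b hab
  · have hba : FreeGroup.of x * b.1 = a.1 := by
      rw [← hab]
      exact mul_inv_cancel_left (FreeGroup.of x) a.1
    rw [← hσ x b a hba]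
    simp
  · simpa using hσ x a b hab

instance residuallyFinite_freeGroup {α : Type*} : Group.ResiduallyFinite (FreeGroup α) := by
  classical
  refine Group.residuallyFinite_of_forall_exists_finite_monoidHom fun g hg => ?_
  let S : Set (FreeGroup α) := {h | ∃ L ∈ g.toWord.tails, FreeGroup.mk L = h}
  have mem_S {L : List (α × Bool)} (hL : L <:+ g.toWord) : FreeGroup.mk L ∈ S :=
    ⟨L, (List.mem_tails _ _).mpr hL, rfl⟩
  have : Finite S := ((List.finite_toSet g.toWord.tails).image FreeGroup.mk).to_subtype
  obtain ⟨σ, hσ⟩ := exists_perm_extending_mul_left S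
  have lift_mk (L : List (α × Bool)) (hL : L <:+ g.toWord) :
      (FreeGroup.lift σ (FreeGroup.mk L) ⟨1, mem_S List.nil_suffix⟩).1 = FreeGroup.mk L := by
    induction L with
    | nil => rfl
    | cons x L ih =>
      have hL' : L <:+ g.toWord := (List.suffix_cons x L).trans hL
      have hx : FreeGroup.mk [x] * FreeGroup.mk L = FreeGroup.mk (x :: L) := FreeGroup.mul_mk
      rw [← hx, map_mul, Equiv.Perm.mul_apply]
      exact (congrArg Subtype.val (hσ x _ ⟨_, mem_S hL⟩ (by rw [ih hL', hx]))).trans hx.symm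
  refine ⟨Equiv.Perm S, inferInstance, inferInstance, FreeGroup.lift σ, fun h_one => hg ?_⟩
  have h := lift_mk g.toWord List.suffix_rfl
  rw [FreeGroup.mk_toWord, h_one] at h
  exact h.symm

theorem finite_monoidHom {G Q : Type*} [Group G] [Group.FG G] [Group Q] [Finite Q] :
    Finite (G →* Q) := by
  obtain ⟨S, hS⟩ := Group.fg_def.mp ‹Group.FG G›
  refine Finite.of_injective (fun (f : G →* Q) (s : S) => f s.1) fun f g hfg => ?_
  exact MonoidHom.eq_of_eqOn_dense hS fun s hs => congrFun hfg ⟨s, hs⟩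

theorem injective_of_surjective_of_residuallyFinite {G : Type*} [Group G] [Group.FG G]
    [Group.ResiduallyFinite G] (f : G →* G) (hf : Surjective f) : Injective f := by
  rw [injective_iff_map_eq_one]
  intro g hg
  by_contra hne
  obtain ⟨N, hN⟩ := Group.exists_finiteIndexNormalSubgroup_notMem g hne
  have : Finite (G →* G ⧸ N.toSubgroup) := finite_monoidHom
  have precomp_injective : Injective fun r : G →* G ⧸ N.toSubgroup => r.comp f :=
    fun r r' h => (MonoidHom.cancel_right hf).mp h
  obtain ⟨r, hr⟩ :=
    Finite.injective_iff_surjective.mp precomp_injective (QuotientGroup.mk' N.toSubgroup)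
  have hgN : g ∈ (QuotientGroup.mk' N.toSubgroup).ker := by simp [← hr, MonoidHom.mem_ker, hg]
  rw [QuotientGroup.ker_mk'] at hgN
  exact hN hgN

theorem injective_of_range_eq {G Γ : Type*} [Group G] [Group.FG G] [Group Γ]
    [Group.ResiduallyFinite Γ] {f g : G →* Γ} (hf : Injective f) (hfg : f.range = g.range) :
    Injective g := by
  let e : G ≃* f.range := MonoidHom.ofInjective hf
  let g' : G →* f.range := g.codRestrict f.range fun x => hfg ▸ ⟨x, rfl⟩
  have hg' : Surjective g' := by
    rintro ⟨y, hy⟩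
    obtain ⟨x, rfl⟩ := hfg ▸ hy
    exact ⟨x, rfl⟩
  have : Group.FG f.range := Group.fg_of_surjective e.surjective
  have h := injective_of_surjective_of_residuallyFinite (g'.comp e.symm.toMonoidHom)
    (hg'.comp e.symm.surjective)
  intro x y hxy
  apply e.injective
  apply h
  simpa using Subtype.ext hxy

/-! ### Amalgams and free products -/

theorem exists_amalgam {A : Type u} {B : Type v} {C : Type w} [Group A] [Group B] [Group C]
    {f : A →* B} {g : A →* C} (hf : Injective f) (hg : Injective g) :
    ∃ (P : Type (max u v w)) (_ : Group P) (i : B →* P) (j : C →* P), Injective i ∧ Injective j ∧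
      i.comp f = j.comp g := by
  let φ : Bool → A →* B × C := fun b =>
    if b then (MonoidHom.inl B C).comp f else (MonoidHom.inr B C).comp g
  have hφ : ∀ b, Injective (φ b) := by
    rintro (_ | _)
    · exact (Prod.mk_right_injective 1).comp hg
    · exact (Prod.mk_left_injective 1).comp hf
  refine ⟨Monoid.PushoutI φ, inferInstance,
    (Monoid.PushoutI.of true).comp (MonoidHom.inl B C),
    (Monoid.PushoutI.of false).comp (MonoidHom.inr B C),
    (Monoid.PushoutI.of_injective hφ true).comp (Prod.mk_left_injective 1),
    (Monoid.PushoutI.of_injective hφ false).comp (Prod.mk_right_injective 1), ?_⟩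
  ext a
  exact (Monoid.PushoutI.of_apply_eq_base φ true a).trans
    (Monoid.PushoutI.of_apply_eq_base φ false a).symm

theorem coprod_map_id_injective {A B N : Type*} [Group A] [Group B] [Group N] {f : A →* B}
    (hf : Injective f) : Injective (map f (MonoidHom.id N)) := by
  obtain ⟨P, _, i, j, -, hj, hij⟩ := exists_amalgam hf (inl_injective (M := A) (N := N))
  have h : (lift i (j.comp inr)).comp (map f (MonoidHom.id N)) = j := hom_ext hij rfl
  exact Injective.of_comp (f := lift i (j.comp inr)) (by rwa [← MonoidHom.coe_comp, h])

theorem coprod_map_id_surjective {A B N : Type*} [Group A] [Group B] [Group N] {f : A →* B}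
    (hf : Surjective f) : Surjective (map f (MonoidHom.id N)) := by
  rw [← MonoidHom.range_eq_top, range_eq, map_comp_inl, map_comp_inr, MonoidHom.comp_id,
    MonoidHom.range_comp, MonoidHom.range_eq_top.mpr hf, ← MonoidHom.range_eq_map,
    range_inl_sup_range_inr]

instance fg_coprod {A B : Type*} [Group A] [Group B] [Group.FG A] [Group.FG B] :
    Group.FG (Monoid.Coprod A B) := by
  have hA : (inl : A →* Monoid.Coprod A B).range.FG :=
    (Group.fg_iff_subgroup_fg _).mp (Group.fg_range _)
  have hB : (inr : B →* Monoid.Coprod A B).range.FG :=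
    (Group.fg_iff_subgroup_fg _).mp (Group.fg_range _)
  exact Group.fg_def.mpr (range_inl_sup_range_inr (G := A) (H := B) ▸ hA.sup hB)

/-- The isomorphism `(A ∗ F(ι)) ∗ F(κ) ≃ A ∗ F(ι ⊕ κ)`. -/
def coprodFreeGroupSum (A ι κ : Type*) [Group A] :
    Monoid.Coprod (Monoid.Coprod A (FreeGroup ι)) (FreeGroup κ) ≃*
      Monoid.Coprod A (FreeGroup (ι ⊕ κ)) :=
  MonoidHom.toMulEquiv
    (lift (map (.id A) (FreeGroup.map Sum.inl)) (inr.comp (FreeGroup.map Sum.inr)))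
    (lift (inl.comp inl)
      (FreeGroup.lift (Sum.elim (fun i => inl (inr (.of i))) (fun k => inr (.of k)))))
    (by ext <;> simp) (by
      refine hom_ext rfl (FreeGroup.ext_hom _ _ ?_)
      rintro (i | k) <;> simp)

/-! ### Relative freeness -/

theorem exists_fin_closure_eq {Γ : Type*} [Group Γ] {B : Subgroup Γ} (hB : B.FG) :
    ∃ (n : ℕ) (s : Fin n → Γ), Subgroup.closure (Set.range s) = B := by
  obtain ⟨S, hS⟩ := hB
  refine ⟨S.card, fun i => S.equivFin.symm i, ?_⟩
  rw [← hS, Set.range_comp' Subtype.val, S.equivFin.symm.range_eq_univ, Set.image_univ,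
    Subtype.range_coe_subtype]
  rfl

section FreeOver

variable {Γ : Type*} [Group Γ] {A : Subgroup Γ} {ι κ : Type*}

/-- The homomorphism `A ∗ F(ι) → Γ` extending the inclusion of `A` and the family `c`. -/
abbrev relativeLift (A : Subgroup Γ) (c : ι → Γ) : Monoid.Coprod A (FreeGroup ι) →* Γ :=
  lift A.subtype (FreeGroup.lift c)

/-- The family `c` is a free basis relative to `A`: the subgroup generated by `A` and `c` is the
free product of `A` and the free group on `c`. -/
def FreeOver (A : Subgroup Γ) (c : ι → Γ) : Prop :=
  Injective (relativeLift A c)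

theorem range_relativeLift (A : Subgroup Γ) (c : ι → Γ) :
    (relativeLift A c).range = A ⊔ Subgroup.closure (Set.range c) := by
  rw [range_lift, Subgroup.range_subtype, FreeGroup.range_lift_eq_closure]

theorem freeOver_of_isEmpty [IsEmpty ι] (A : Subgroup Γ) (c : ι → Γ) : FreeOver A c := by
  have inl_comp_fst : (inl.comp fst : Monoid.Coprod A (FreeGroup ι) →* _) = MonoidHom.id _ :=
    hom_ext rfl (FreeGroup.ext_hom _ _ isEmptyElim)
  intro x y hxy
  have relativeLift_eq_fst : relativeLift A c = A.subtype.comp fst :=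
    hom_ext rfl (FreeGroup.ext_hom _ _ isEmptyElim)
  rw [relativeLift_eq_fst] at hxy
  rw [← MonoidHom.id_apply _ x, ← MonoidHom.id_apply _ y, ← inl_comp_fst]
  exact congrArg inl (Subtype.ext hxy)

theorem freeOver_of_perm {T : Type*} (ρ : Γ →* Equiv.Perm T) {c : ι → Γ}
    {π : Monoid.Coprod A (FreeGroup ι) → T} (hπ : Injective π)
    (hA : ∀ (a : A) x, ρ a (π x) = π (inl a * x))
    (hc : ∀ i x, ρ (c i) (π x) = π (inr (.of i) * x)) : FreeOver A c := by
  have ρ_relativeLift (y x) : ρ (relativeLift A c y) (π x) = π (y * x) := by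
    induction y using Monoid.Coprod.induction_on generalizing x with
    | inl a => exact hA a x
    | inr b =>
      induction b using FreeGroup.induction_on generalizing x with
      | C1 => simp
      | of i => simpa using hc i x
      | inv_of i _ =>
        rw [map_inv, map_inv, map_inv, Equiv.Perm.inv_eq_iff_eq]
        have h := hc i ((inr (.of i))⁻¹ * x)
        rw [← mul_assoc, mul_inv_cancel, one_mul] at h
        simpa using h.symm
      | mul a b iha ihb => rw [map_mul, map_mul, map_mul, Equiv.Perm.mul_apply, ihb, iha, mul_assoc]
    | mul a b iha ihb => rw [map_mul, map_mul, Equiv.Perm.mul_apply, ihb, iha, mul_assoc]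
  intro y z hyz
  have h : π (y * 1) = π (z * 1) := by rw [← ρ_relativeLift, ← ρ_relativeLift, hyz]
  simpa using hπ h

theorem freeOver_comp_equiv_iff {c : κ → Γ} (e : ι ≃ κ) : FreeOver A (c ∘ e) ↔ FreeOver A c := by
  let E : Monoid.Coprod A (FreeGroup ι) ≃* Monoid.Coprod A (FreeGroup κ) :=
    MulEquiv.coprodCongr (MulEquiv.refl A) (FreeGroup.freeGroupCongr e)
  have h : relativeLift A (c ∘ e) = (relativeLift A c).comp E.toMonoidHom := by
    refine hom_ext rfl (FreeGroup.ext_hom _ _ fun i => ?_)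
    simp [E]
  rw [FreeOver, h, FreeOver]
  exact E.injective_comp _

theorem freeOver_sumElim_iff {c : ι → Γ} {d : κ → Γ} :
    FreeOver A (Sum.elim c d) ↔
      FreeOver A c ∧ FreeOver (A ⊔ Subgroup.closure (Set.range c)) d := by
  let p : Monoid.Coprod A (FreeGroup ι) →* ↥(A ⊔ Subgroup.closure (Set.range c)) :=
    (relativeLift A c).codRestrict _ fun x => range_relativeLift A c ▸ ⟨x, rfl⟩
  have hp : Surjective p := by
    rintro ⟨y, hy⟩
    rw [← range_relativeLift] at hy
    obtain ⟨x, rfl⟩ := hy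
    exact ⟨x, rfl⟩
  have hpc : Injective p ↔ FreeOver A c := MonoidHom.injective_codRestrict _ _ _
  have factor : (relativeLift A (Sum.elim c d)).comp (coprodFreeGroupSum A ι κ).toMonoidHom =
      (relativeLift _ d).comp (map p (.id _)) := by
    refine hom_ext (hom_ext rfl (FreeGroup.ext_hom _ _ fun i => ?_))
      (FreeGroup.ext_hom _ _ fun k => ?_) <;> simp [coprodFreeGroupSum, p]
  have hE : FreeOver A (Sum.elim c d) ↔ Injective ((relativeLift _ d).comp (map p (.id _))) := by
    rw [← factor]
    exact ((coprodFreeGroupSum A ι κ).injective_comp _).symm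
  rw [hE, ← hpc, MonoidHom.coe_comp]
  refine ⟨fun h => ⟨?_, ?_⟩, fun h => h.2.comp (coprod_map_id_injective h.1)⟩
  · exact Injective.of_comp (f := inl) (h.of_comp.comp inl_injective)
  · exact h.of_comp_right (coprod_map_id_surjective hp)

theorem freeOver_cons_iff {m : ℕ} {l : Γ} {d : Fin m → Γ} :
    FreeOver A (Fin.cons l d : Fin (m + 1) → Γ) ↔
      FreeOver A (fun _ : Unit => l) ∧ FreeOver (A ⊔ Subgroup.closure {l}) d := by
  let e : Unit ⊕ Fin m ≃ Fin (m + 1) :=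
    (Equiv.sumComm _ _).trans ((Equiv.optionEquivSumPUnit _).symm.trans (finSuccEquiv m).symm)
  have he : (Fin.cons l d : Fin (m + 1) → Γ) ∘ e = Sum.elim (fun _ => l) d := by
    ext (_ | i) <;> simp [e]
  rw [← freeOver_comp_equiv_iff e, he, freeOver_sumElim_iff, Set.range_const]

theorem freeOver_cons_iff' {m : ℕ} {l : Γ} {d : Fin m → Γ} :
    FreeOver A (Fin.cons l d : Fin (m + 1) → Γ) ↔
      FreeOver A d ∧ FreeOver (A ⊔ Subgroup.closure (Set.range d)) (fun _ : Unit => l) := by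
  let e : Fin m ⊕ Unit ≃ Fin (m + 1) :=
    (Equiv.optionEquivSumPUnit _).symm.trans (finSuccEquiv m).symm
  have he : (Fin.cons l d : Fin (m + 1) → Γ) ∘ e = Sum.elim d (fun _ => l) := by
    ext (i | _) <;> simp [e]
  rw [← freeOver_comp_equiv_iff e, he, freeOver_sumElim_iff]

section Map

variable {Δ : Type*} [Group Δ] {f : Γ →* Δ} {B : Subgroup Δ} {c : ι → Γ}

theorem FreeOver.injective_comp_relativeLift (hf : Set.InjOn f A) (hAB : A.map f ≤ B)
    (h : FreeOver B (f ∘ c)) : Injective (f.comp (relativeLift A c)) := by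
  let g : A →* B := (f.comp A.subtype).codRestrict B fun a => hAB ⟨a, a.2, rfl⟩
  have hg : Injective g := (MonoidHom.injective_codRestrict _ _ _).mpr hf.injective
  have factor : f.comp (relativeLift A c) = (relativeLift B (f ∘ c)).comp (map g (.id _)) :=
    hom_ext rfl (FreeGroup.ext_hom _ _ fun i => by simp)
  rw [factor]
  exact h.comp (coprod_map_id_injective hg)

theorem FreeOver.of_map (hf : Set.InjOn f A) (hAB : A.map f ≤ B) (h : FreeOver B (f ∘ c)) :
    FreeOver A c :=
  Injective.of_comp (f := f) (h.injective_comp_relativeLift hf hAB)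

theorem FreeOver.injOn_sup (hf : Set.InjOn f A) (h : FreeOver (A.map f) (f ∘ c)) :
    Set.InjOn f ↑(A ⊔ Subgroup.closure (Set.range c)) := by
  rw [← range_relativeLift]
  rintro _ ⟨x, rfl⟩ _ ⟨y, rfl⟩ hxy
  exact congrArg _ (h.injective_comp_relativeLift hf le_rfl hxy)

end Map

theorem FreeOver.of_sup_eq_sup [Group.ResiduallyFinite Γ] [Finite ι] (hA : A.FG) {c d : ι → Γ}
    (hc : FreeOver A c)
    (hcd : A ⊔ Subgroup.closure (Set.range c) = A ⊔ Subgroup.closure (Set.range d)) :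
    FreeOver A d := by
  have : Group.FG A := (Group.fg_iff_subgroup_fg A).mpr hA
  exact injective_of_range_eq hc (by rw [range_relativeLift, range_relativeLift, hcd])

/-- `B` is the free product of `A` and a free group of rank `k`. -/
def IsFreeExtension (A B : Subgroup Γ) (k : ℕ) : Prop :=
  ∃ c : Fin k → Γ, B = A ⊔ Subgroup.closure (Set.range c) ∧ FreeOver A c

theorem sup_closure_range_cons {m : ℕ} (A : Subgroup Γ) (l : Γ) (d : Fin m → Γ) :
    A ⊔ Subgroup.closure (Set.range (Fin.cons l d : Fin (m + 1) → Γ)) =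
      A ⊔ Subgroup.closure {l} ⊔ Subgroup.closure (Set.range d) := by
  rw [Fin.range_cons, Set.insert_eq, Subgroup.closure_union, sup_assoc]

/-- The exchange of `Θ l` for `l`: a Hopfian argument makes `Θ l` part of a basis over
`A ⊔ ⟨l⟩`, hence free over `B ≥ Θ(A)`, and injectivity of `Θ` descends this to `l` over `A`. -/
theorem freeOver_cons_of_isFreeExtension [Group.ResiduallyFinite Γ] {Θ : Γ →* Γ}
    (hΘ : Injective Θ) (hA : A.FG) {B : Subgroup Γ} (hAB : A.map Θ ≤ B) {l : Γ} {m : ℕ}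
    {d : Fin m → Γ} (hB : B = A ⊔ Subgroup.closure {l} ⊔ Subgroup.closure (Set.range d))
    (h : IsFreeExtension (A ⊔ Subgroup.closure {l}) (B ⊔ Subgroup.closure {Θ l}) (m + 1)) :
    FreeOver A (Fin.cons l d : Fin (m + 1) → Γ) := by
  obtain ⟨c, hc, hc_free⟩ := h
  have hspan : B ⊔ Subgroup.closure {Θ l} = A ⊔ Subgroup.closure {l} ⊔
      Subgroup.closure (Set.range (Fin.cons (Θ l) d : Fin (m + 1) → Γ)) := by
    rw [sup_closure_range_cons, hB, sup_right_comm]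
  have hfg : (A ⊔ Subgroup.closure {l}).FG :=
    hA.sup ((Subgroup.fg_iff _).mpr ⟨_, rfl, Set.finite_singleton l⟩)
  obtain ⟨hd, hΘl⟩ :=
    freeOver_cons_iff'.mp (hc_free.of_sup_eq_sup hfg (hc.symm.trans hspan))
  rw [← hB] at hΘl
  exact freeOver_cons_iff.mpr ⟨hΘl.of_map (f := Θ) hΘ.injOn hAB, hd⟩

end FreeOver

/-! ### Labelled graphs and their fundamental groups -/

/-- An oriented edge with vertices in `V` labelled by a letter of `α`. -/
@[ext]
structure Edge (V α : Type*) where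
  src : V
  label : α
  tgt : V
deriving DecidableEq

/-- The edge obtained by applying `φ` to both endpoints. -/
@[simps]
def Edge.map {V W α : Type*} (φ : V → W) (e : Edge V α) : Edge W α where
  src := φ e.src
  label := e.label
  tgt := φ e.tgt

section Graph

variable {V α : Type*} {E E' : Finset (Edge V α)} {u v w : V} {g h : FreeGroup α}

/-- `Walk E u g v` says that some edge path from `u` to `v` along edges of `E`, traversed in either
direction, spells the element `g`. -/
inductive Walk (E : Finset (Edge V α)) (u : V) : FreeGroup α → V → Prop
  | nil : Walk E u 1 u
  | fwd {g : FreeGroup α} {e : Edge V α} :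
      Walk E u g e.src → e ∈ E → Walk E u (g * FreeGroup.of e.label) e.tgt
  | bwd {g : FreeGroup α} {e : Edge V α} :
      Walk E u g e.tgt → e ∈ E → Walk E u (g * (FreeGroup.of e.label)⁻¹) e.src

namespace Walk

theorem trans (hg : Walk E u g v) (hh : Walk E v h w) : Walk E u (g * h) w := by
  induction hh with
  | nil => rwa [mul_one]
  | fwd _ he ih => exact mul_assoc g _ _ ▸ ih.fwd he
  | bwd _ he ih => exact mul_assoc g _ _ ▸ ih.bwd he

theorem symm (hg : Walk E u g v) : Walk E v g⁻¹ u := by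
  induction hg with
  | nil => exact inv_one (G := FreeGroup α) ▸ nil
  | fwd _ he ih => simpa using (nil.bwd he).trans ih
  | bwd _ he ih => simpa using (nil.fwd he).trans ih

theorem mono (hE : E ⊆ E') (hg : Walk E u g v) : Walk E' u g v := by
  induction hg with
  | nil => exact nil
  | fwd _ he ih => exact ih.fwd (hE he)
  | bwd _ he ih => exact ih.bwd (hE he)

theorem map {W : Type*} [DecidableEq W] [DecidableEq α] (φ : V → W) (hg : Walk E u g v) :
    Walk (E.image (Edge.map φ)) (φ u) g (φ v) := by
  induction hg with
  | nil => exact nil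
  | fwd _ he ih => exact ih.fwd (Finset.mem_image_of_mem (Edge.map φ) he)
  | bwd _ he ih => exact ih.bwd (Finset.mem_image_of_mem (Edge.map φ) he)

theorem conj_mem {p : V → FreeGroup α} {S : Subgroup (FreeGroup α)}
    (hp : ∀ e ∈ E, p e.src * FreeGroup.of e.label * (p e.tgt)⁻¹ ∈ S) (hg : Walk E u g v) :
    p u * g * (p v)⁻¹ ∈ S := by
  induction hg with
  | nil => simp
  | fwd _ he ih => simpa [mul_assoc] using mul_mem ih (hp _ he)
  | bwd _ he ih => simpa [mul_assoc] using mul_mem ih (inv_mem (hp _ he))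

theorem exists_edge_crossing {S : Finset V} (hg : Walk E u g v) (hu : u ∈ S) (hv : v ∉ S) :
    ∃ e ∈ E, (e.src ∈ S ∨ e.tgt ∈ S) ∧ (e.src ∉ S ∨ e.tgt ∉ S) := by
  induction hg with
  | nil => exact absurd hu hv
  | @fwd _ e _ he ih =>
    by_cases hsrc : e.src ∈ S
    · exact ⟨e, he, .inl hsrc, .inr hv⟩
    · exact ih hsrc
  | @bwd _ e _ he ih =>
    by_cases htgt : e.tgt ∈ S
    · exact ⟨e, he, .inr htgt, .inl hv⟩
    · exact ih htgt

end Walk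

/-- A finite connected `α`-labelled graph with a base point. -/
structure PointedGraph (V α : Type*) where
  verts : Finset V
  edges : Finset (Edge V α)
  base : V
  base_mem : base ∈ verts
  src_mem : ∀ e ∈ edges, e.src ∈ verts
  tgt_mem : ∀ e ∈ edges, e.tgt ∈ verts
  exists_walk : ∀ v ∈ verts, ∃ g, Walk edges base g v

namespace PointedGraph

variable {X Z : PointedGraph V α} {p q : V → FreeGroup α} {e : Edge V α}

/-- The image of the fundamental group of `X` in the free group: the labels of closed walks at the
base point. -/
def pi1 (X : PointedGraph V α) : Subgroup (FreeGroup α) where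
  carrier := {g | Walk X.edges X.base g X.base}
  mul_mem' := Walk.trans
  one_mem' := .nil
  inv_mem' := Walk.symm

theorem mem_pi1 : g ∈ X.pi1 ↔ Walk X.edges X.base g X.base := Iff.rfl

theorem pi1_le_of_forall_edge {S : Subgroup (FreeGroup α)} (hbase : p X.base ∈ S)
    (hp : ∀ e ∈ X.edges, p e.src * FreeGroup.of e.label * (p e.tgt)⁻¹ ∈ S) : X.pi1 ≤ S :=
  fun g hg => by
    have h := mul_mem (mul_mem (inv_mem hbase) (Walk.conj_mem hp hg)) hbase
    simpa [mul_assoc] using h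

/-- `p v` is the label of a walk from the base point to `v`, for every vertex `v`. -/
structure IsPotential (X : PointedGraph V α) (p : V → FreeGroup α) : Prop where
  base_eq_one : p X.base = 1
  walk : ∀ v ∈ X.verts, Walk X.edges X.base (p v) v

theorem exists_isPotential (X : PointedGraph V α) : ∃ p, X.IsPotential p := by
  choose! p hp using X.exists_walk
  refine ⟨fun v => (p X.base)⁻¹ * p v, inv_mul_cancel _, fun v hv => ?_⟩
  exact (hp _ X.base_mem).symm.trans (hp v hv)

theorem IsPotential.mul_inv_mem_pi1 (hp : X.IsPotential p) (hu : u ∈ X.verts) (hv : v ∈ X.verts)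
    (hg : Walk X.edges u g v) : p u * g * (p v)⁻¹ ∈ X.pi1 :=
  ((hp.walk u hu).trans hg).trans (hp.walk v hv).symm

theorem IsPotential.edge_mem_pi1 (hp : X.IsPotential p) (he : e ∈ X.edges) :
    p e.src * FreeGroup.of e.label * (p e.tgt)⁻¹ ∈ X.pi1 :=
  ((hp.walk _ (X.src_mem e he)).fwd he).trans (hp.walk _ (X.tgt_mem e he)).symm

/-- `X ≤ Z` says that `X` is a subgraph of `Z` with the same base point. -/
instance : Preorder (PointedGraph V α) where
  le X Z := X.base = Z.base ∧ X.verts ⊆ Z.verts ∧ X.edges ⊆ Z.edges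
  le_refl X := ⟨rfl, subset_rfl, subset_rfl⟩
  le_trans _ _ _ h h' := ⟨h.1.trans h'.1, h.2.1.trans h'.2.1, h.2.2.trans h'.2.2⟩

theorem base_eq_of_le (h : X ≤ Z) : X.base = Z.base := h.1

theorem verts_subset_of_le (h : X ≤ Z) : X.verts ⊆ Z.verts := h.2.1

theorem edges_subset_of_le (h : X ≤ Z) : X.edges ⊆ Z.edges := h.2.2

theorem pi1_mono (h : X ≤ Z) : X.pi1 ≤ Z.pi1 := fun g hg => by
  rw [mem_pi1, ← base_eq_of_le h]
  exact Walk.mono (edges_subset_of_le h) hg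

/-- The graph with a single vertex and no edges. -/
@[simps verts edges]
def point (α : Type*) (v : V) : PointedGraph V α where
  verts := {v}
  edges := ∅
  base := v
  base_mem := Finset.mem_singleton_self v
  src_mem := by simp
  tgt_mem := by simp
  exists_walk u hu := ⟨1, Finset.mem_singleton.mp hu ▸ .nil⟩

theorem pi1_point (v : V) : (point α v).pi1 = ⊥ :=
  le_bot_iff.mp (pi1_le_of_forall_edge (p := fun _ => 1) (one_mem _) (by simp))

theorem point_base_le (X : PointedGraph V α) : point α X.base ≤ X :=
  ⟨rfl, by simpa using X.base_mem, by simp⟩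

section Map

variable [DecidableEq α] {W : Type*} [DecidableEq W]

/-- The image of `X` under a map of vertices. -/
@[simps]
def map (φ : V → W) (X : PointedGraph V α) : PointedGraph W α where
  verts := X.verts.image φ
  edges := X.edges.image (Edge.map φ)
  base := φ X.base
  base_mem := Finset.mem_image_of_mem φ X.base_mem
  src_mem := by
    rintro _ heφ
    obtain ⟨e, he, rfl⟩ := Finset.mem_image.mp heφ
    exact Finset.mem_image_of_mem φ (X.src_mem e he)
  tgt_mem := by
    rintro _ heφ
    obtain ⟨e, he, rfl⟩ := Finset.mem_image.mp heφ
    exact Finset.mem_image_of_mem φ (X.tgt_mem e he)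
  exists_walk := by
    rintro _ hvφ
    obtain ⟨v, hv, rfl⟩ := Finset.mem_image.mp hvφ
    obtain ⟨g, hg⟩ := X.exists_walk v hv
    exact ⟨g, hg.map φ⟩

theorem map_mono (φ : V → W) (h : X ≤ Z) : X.map φ ≤ Z.map φ :=
  ⟨congrArg φ (base_eq_of_le h), Finset.image_mono φ (verts_subset_of_le h),
    Finset.image_mono _ (edges_subset_of_le h)⟩

theorem pi1_le_pi1_map (φ : V → W) (X : PointedGraph V α) :
    X.pi1 ≤ (X.map φ).pi1 :=
  fun _ hg => Walk.map φ hg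

theorem newEdges_map_subset [DecidableEq V] (φ : V → W) :
    (Z.map φ).edges \ (X.map φ).edges ⊆ (Z.edges \ X.edges).image (Edge.map φ) := by
  intro _ he
  obtain ⟨heZ, heX⟩ := Finset.mem_sdiff.mp he
  obtain ⟨e, heZ', rfl⟩ := Finset.mem_image.mp heZ
  exact Finset.mem_image_of_mem _
    (Finset.mem_sdiff.mpr ⟨heZ', fun h => heX (Finset.mem_image_of_mem _ h)⟩)

end Map

variable [DecidableEq V] [DecidableEq α]

section InsertEdge

/-- The graph obtained by attaching an edge along at least one of its endpoints. -/
@[simps]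
def insertEdge (X : PointedGraph V α) (e : Edge V α) (he : e.src ∈ X.verts ∨ e.tgt ∈ X.verts) :
    PointedGraph V α where
  verts := insert e.src (insert e.tgt X.verts)
  edges := insert e X.edges
  base := X.base
  base_mem := by simp [X.base_mem]
  src_mem e' he' := by
    obtain rfl | he' := Finset.mem_insert.mp he'
    · simp
    · simp [X.src_mem e' he']
  tgt_mem e' he' := by
    obtain rfl | he' := Finset.mem_insert.mp he'
    · simp
    · simp [X.tgt_mem e' he']
  exists_walk := by
    have exists_walk_old : ∀ v ∈ X.verts, ∃ g, Walk (insert e X.edges) X.base g v := fun v hv =>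
      (X.exists_walk v hv).imp fun _ => Walk.mono (Finset.subset_insert _ _)
    have he_mem : e ∈ insert e X.edges := Finset.mem_insert_self _ _
    have exists_walk_src : ∃ g, Walk (insert e X.edges) X.base g e.src :=
      he.elim (exists_walk_old _) fun htgt =>
        let ⟨_, hg⟩ := exists_walk_old _ htgt
        ⟨_, hg.bwd he_mem⟩
    obtain ⟨g, hg⟩ := exists_walk_src
    intro v hv
    obtain rfl | rfl | hv := by simpa using hv
    · exact ⟨g, hg⟩
    · exact ⟨_, hg.fwd he_mem⟩
    · exact exists_walk_old v hv

variable {he : e.src ∈ X.verts ∨ e.tgt ∈ X.verts}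

theorem le_insertEdge : X ≤ X.insertEdge e he :=
  ⟨rfl, (Finset.subset_insert _ _).trans (Finset.subset_insert _ _), Finset.subset_insert _ _⟩

theorem insertEdge_le (h : X ≤ Z) (heZ : e ∈ Z.edges) : X.insertEdge e he ≤ Z :=
  ⟨h.1, by
    simp [Finset.insert_subset_iff, Z.src_mem e heZ, Z.tgt_mem e heZ, verts_subset_of_le h], by
    simp [Finset.insert_subset_iff, heZ, edges_subset_of_le h]⟩

theorem pi1_insertEdge_le {S : Subgroup (FreeGroup α)} (hp : X.IsPotential p)
    (hpq : Set.EqOn p q X.verts) (hXS : X.pi1 ≤ S)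
    (heS : q e.src * FreeGroup.of e.label * (q e.tgt)⁻¹ ∈ S) :
    (X.insertEdge e he).pi1 ≤ S := by
  refine pi1_le_of_forall_edge (p := q) ?_ fun e' he' => ?_
  · rw [insertEdge_base, ← hpq X.base_mem, hp.base_eq_one]
    exact one_mem S
  · obtain rfl | he' := Finset.mem_insert.mp he'
    · exact heS
    · rw [← hpq (X.src_mem e' he'), ← hpq (X.tgt_mem e' he')]
      exact hXS (hp.edge_mem_pi1 he')

theorem pi1_insertEdge_of_notMem (hnew : e.src ∉ X.verts ∨ e.tgt ∉ X.verts) :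
    (X.insertEdge e he).pi1 = X.pi1 := by
  refine le_antisymm ?_ (pi1_mono le_insertEdge)
  obtain ⟨p, hp⟩ := X.exists_isPotential
  have update_eqOn {n : V} (hn : n ∉ X.verts) (a : FreeGroup α) :
      Set.EqOn p (update p n a) X.verts :=
    fun v hv => (update_of_ne (ne_of_mem_of_not_mem hv hn) _ _).symm
  obtain hsrc | htgt := hnew
  · have hne : e.tgt ≠ e.src := ne_of_mem_of_not_mem (he.resolve_left hsrc) hsrc
    exact pi1_insertEdge_le hp (update_eqOn hsrc (p e.tgt * (FreeGroup.of e.label)⁻¹)) le_rfl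
      (by simp [hne])
  · have hne : e.src ≠ e.tgt := ne_of_mem_of_not_mem (he.resolve_right htgt) htgt
    exact pi1_insertEdge_le hp (update_eqOn htgt (p e.src * FreeGroup.of e.label)) le_rfl
      (by simp [hne])

theorem pi1_insertEdge_of_walk (hsrc : e.src ∈ X.verts) (htgt : e.tgt ∈ X.verts)
    (hg : Walk X.edges X.base g e.src) (hh : Walk X.edges X.base h e.tgt) :
    (X.insertEdge e he).pi1 =
      X.pi1 ⊔ Subgroup.closure {g * FreeGroup.of e.label * h⁻¹} := by
  obtain ⟨p, hp⟩ := X.exists_isPotential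
  set S := X.pi1 ⊔ Subgroup.closure {g * FreeGroup.of e.label * h⁻¹}
  have hXS : X.pi1 ≤ S := le_sup_left
  have loop_mem : g * FreeGroup.of e.label * h⁻¹ ∈ S :=
    le_sup_right (a := X.pi1) (Subgroup.mem_closure_singleton_self _)
  have hsrcS : p e.src * g⁻¹ ∈ S := hXS ((hp.walk _ hsrc).trans hg.symm)
  have htgtS : h * (p e.tgt)⁻¹ ∈ S := hXS (hh.trans (hp.walk _ htgt).symm)
  refine le_antisymm (pi1_insertEdge_le hp (Set.eqOn_refl _ _) hXS ?_)
    (sup_le (pi1_mono le_insertEdge) ?_)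
  · simpa [mul_assoc] using mul_mem (mul_mem hsrcS loop_mem) htgtS
  · rw [Subgroup.closure_le, Set.singleton_subset_iff]
    have hsub : X.edges ⊆ insert e X.edges := Finset.subset_insert _ _
    exact ((hg.mono hsub).fwd (Finset.mem_insert_self _ _)).trans (hh.mono hsub).symm

end InsertEdge

section Merge

/-- The graph obtained by identifying the vertex `w` with `v`; the result has vertex `v`. -/
abbrev merge (v w : V) (X : PointedGraph V α) : PointedGraph V α :=
  X.map (update id w v)

theorem verts_merge (hv : v ∈ X.verts) (hvw : v ≠ w) :
    (X.merge v w).verts = X.verts.erase w := by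
  ext u
  simp only [map_verts, Finset.mem_image, Finset.mem_erase, update_apply, id]
  constructor
  · rintro ⟨u, hu, rfl⟩
    split_ifs with huw
    exacts [⟨hvw, hv⟩, ⟨huw, hu⟩]
  · rintro ⟨huw, hu⟩
    exact ⟨u, hu, if_neg huw⟩

theorem pi1_merge (hp : X.IsPotential p) (hv : v ∈ X.verts) (hw : w ∈ X.verts) :
    (X.merge v w).pi1 = X.pi1 ⊔ Subgroup.closure {p v * (p w)⁻¹} := by
  set S := X.pi1 ⊔ Subgroup.closure {p v * (p w)⁻¹}
  have hXS : X.pi1 ≤ S := le_sup_left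
  refine le_antisymm ?_ (sup_le (pi1_le_pi1_map _ X) ?_)
  · have update_mul_inv_mem (n : V) : p (update id w v n) * (p n)⁻¹ ∈ S := by
      obtain rfl | hn := eq_or_ne n w
      · rw [update_self]
        exact le_sup_right (a := X.pi1) (Subgroup.mem_closure_singleton_self _)
      · simp [update_of_ne hn]
    refine pi1_le_of_forall_edge (p := p) ?_ fun _ hmerge => ?_
    · simpa [hp.base_eq_one] using update_mul_inv_mem X.base
    · obtain ⟨e, he, rfl⟩ := Finset.mem_image.mp hmerge
      have h := mul_mem (mul_mem (update_mul_inv_mem e.src) (hXS (hp.edge_mem_pi1 he)))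
        (inv_mem (update_mul_inv_mem e.tgt))
      simpa [mul_assoc] using h
  · rw [Subgroup.closure_le, Set.singleton_subset_iff]
    have walk_v := (hp.walk v hv).map (update id w v)
    have walk_w := (hp.walk w hw).map (update id w v)
    have update_eq : update id w v v = update id w v w := by simp [update_apply]
    rw [update_eq] at walk_v
    exact walk_v.trans walk_w.symm

theorem pi1_merge_of_walk_one (hv : v ∈ X.verts) (hw : w ∈ X.verts) (h : Walk X.edges v 1 w) :
    (X.merge v w).pi1 = X.pi1 := by
  obtain ⟨p, hp⟩ := X.exists_isPotential
  rw [pi1_merge hp hv hw, sup_eq_left, Subgroup.closure_le, Set.singleton_subset_iff]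
  simpa using hp.mul_inv_mem_pi1 hv hw h

theorem merge_of_notMem (v : V) (hw : w ∉ X.verts) : X.merge v w = X := by
  have update_eq (u : V) (hu : u ∈ X.verts) : update id w v u = u :=
    update_of_ne (ne_of_mem_of_not_mem hu hw) _ _
  have map_eq (e : Edge V α) (he : e ∈ X.edges) : e.map (update id w v) = e :=
    Edge.ext (update_eq _ (X.src_mem e he)) rfl (update_eq _ (X.tgt_mem e he))
  have hverts : X.verts.image (update id w v) = X.verts :=
    (Finset.image_congr update_eq).trans Finset.image_id
  have hedges : X.edges.image (Edge.map (update id w v)) = X.edges :=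
    (Finset.image_congr map_eq).trans Finset.image_id
  have hbase : update id w v X.base = X.base := update_eq _ X.base_mem
  cases X
  simp_all [map]

theorem card_verts_merge_lt (hv : v ∈ X.verts) (hvw : v ≠ w) (hw : w ∈ X.verts) :
    (X.merge v w).verts.card < X.verts.card := by
  rw [verts_merge hv hvw]
  exact Finset.card_erase_lt_of_mem hw

theorem newVerts_merge_of_mem (hXZ : X ≤ Z) (hv : v ∈ X.verts) (hvw : v ≠ w) (hw : w ∈ X.verts) :
    (Z.merge v w).verts \ (X.merge v w).verts = Z.verts \ X.verts := by
  rw [verts_merge hv hvw, verts_merge (verts_subset_of_le hXZ hv) hvw,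
    ← Finset.erase_sdiff_distrib,
    Finset.erase_eq_of_notMem (by simp [hw])]

end Merge

end PointedGraph

/-! ### Folded graphs -/

/-- Distinct edges with the same label have distinct sources and distinct targets. -/
def Folded (E : Finset (Edge V α)) : Prop :=
  ∀ x, Relator.BiUnique fun u v => (⟨u, x, v⟩ : Edge V α) ∈ E

theorem Folded.mono (hE : Folded E') (h : E ⊆ E') : Folded E :=
  fun x => ⟨fun _ _ _ ha hb => (hE x).1 (h ha) (h hb), fun _ _ _ ha hb => (hE x).2 (h ha) (h hb)⟩

theorem Folded.exists_hom_perm {Q : Type*} [Group Q] (hE : Folded E) (κ : Edge V α → Q) :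
    ∃ ρ : FreeGroup α →* Equiv.Perm (V × Q), ∀ e ∈ E, ∀ q,
      ρ (FreeGroup.of e.label) (e.tgt, q) = (e.src, κ e * q) := by
  have exists_perm (x : α) :
      ∃ σ : Equiv.Perm V, ∀ v u, (⟨u, x, v⟩ : Edge V α) ∈ E → σ v = u := by
    refine exists_perm_of_biUnique ⟨fun _ _ _ h h' => (hE x).2 h h',
      fun _ _ _ h h' => (hE x).1 h h'⟩
      ((E.finite_toSet.image Edge.src).union (E.finite_toSet.image Edge.tgt)) fun v u he => ?_
    exact ⟨.inr ⟨_, he, rfl⟩, .inl ⟨_, he, rfl⟩⟩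
  choose σ hσ using exists_perm
  refine ⟨FreeGroup.lift fun x =>
    (σ x).prodShear fun v => Equiv.mulLeft (κ ⟨σ x v, x, v⟩), fun e he q => ?_⟩
  simp [hσ e.label e.tgt e.src he]

theorem Walk.perm_apply {Q : Type*} [Group Q] {p : V → FreeGroup α} {A : Subgroup (FreeGroup α)}
    {φ : A →* Q} {ρ : FreeGroup α →* Equiv.Perm (V × Q)}
    (hp : ∀ e ∈ E, p e.src * FreeGroup.of e.label * (p e.tgt)⁻¹ ∈ A)
    (hρ : ∀ e (he : e ∈ E) q,
      ρ (FreeGroup.of e.label) (e.tgt, q) = (e.src, φ ⟨_, hp e he⟩ * q))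
    (hg : Walk E u g v) (q : Q) : ρ g (v, q) = (u, φ ⟨_, hg.conj_mem hp⟩ * q) := by
  induction hg generalizing q with
  | nil =>
    have h_one : (⟨_, (nil (E := E) (u := u)).conj_mem hp⟩ : A) = 1 := Subtype.ext (by simp)
    rw [h_one, map_one, map_one, one_mul, Equiv.Perm.one_apply]
  | @fwd g e hg he ih =>
    have h_mul : (⟨_, (hg.fwd he).conj_mem hp⟩ : A) = ⟨_, hg.conj_mem hp⟩ * ⟨_, hp e he⟩ :=
      Subtype.ext (by simp [mul_assoc])
    rw [h_mul, map_mul, Equiv.Perm.mul_apply, hρ e he, ih, map_mul, mul_assoc (φ _)]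
  | @bwd g e hg he ih =>
    have h_mul : (⟨_, (hg.bwd he).conj_mem hp⟩ : A) = ⟨_, hg.conj_mem hp⟩ * ⟨_, hp e he⟩⁻¹ :=
      Subtype.ext (by simp [mul_assoc])
    have h_inv : ρ (FreeGroup.of e.label)⁻¹ (e.src, q) = (e.tgt, (φ ⟨_, hp e he⟩)⁻¹ * q) := by
      rw [map_inv, Equiv.Perm.inv_eq_iff_eq, hρ e he, mul_inv_cancel_left]
    rw [h_mul, map_mul, Equiv.Perm.mul_apply, h_inv, ih, map_mul, map_inv, mul_assoc (φ _)]

namespace PointedGraph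

variable {X Z : PointedGraph V α} {p q : V → FreeGroup α} {e : Edge V α}

section FreeOver

variable [DecidableEq V] [DecidableEq α]

-- The free group acts on `V × (A ∗ ℤ)` by permuting vertices along edges, twisted by a cocycle
-- which on loops at the base point computes the `A ∗ ℤ`-normal form.
theorem freeOver_of_folded_insert (hE : Folded (insert e X.edges)) (he : e ∉ X.edges)
    (hp : X.IsPotential p) (hsrc : e.src ∈ X.verts) (htgt : e.tgt ∈ X.verts) :
    FreeOver X.pi1 fun _ : Unit => p e.src * FreeGroup.of e.label * (p e.tgt)⁻¹ := by
  let κ (e' : Edge V α) : Monoid.Coprod X.pi1 (FreeGroup Unit) :=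
    if he' : e' ∈ X.edges then inl ⟨_, hp.edge_mem_pi1 he'⟩ else inr (.of ())
  obtain ⟨ρ, hρ⟩ := hE.exists_hom_perm κ
  have ρ_walk {u v : V} {g : FreeGroup α} (hg : Walk X.edges u g v) (q) :=
    hg.perm_apply (φ := inl) (fun _ => hp.edge_mem_pi1) (fun e' he' q => by
      rw [hρ e' (Finset.mem_insert_of_mem he'), show κ e' = _ from dif_pos he']) q
  have ρ_potential {v : V} (hv : v ∈ X.verts) (q) : ρ (p v) (v, q) = (X.base, q) := by
    have h_one : (⟨_, (hp.walk v hv).conj_mem fun _ => hp.edge_mem_pi1⟩ : X.pi1) = 1 :=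
      Subtype.ext (by simp [hp.base_eq_one])
    rw [ρ_walk (hp.walk v hv), h_one, map_one, one_mul]
  have ρ_loop (q) : ρ (p e.src * FreeGroup.of e.label * (p e.tgt)⁻¹) (X.base, q) =
      (X.base, inr (.of ()) * q) := by
    have hκ : κ e = inr (.of ()) := dif_neg he
    rw [map_mul, map_mul, map_inv, Equiv.Perm.mul_apply, Equiv.Perm.mul_apply,
      Equiv.Perm.inv_eq_iff_eq.mpr (ρ_potential htgt q).symm, hρ e (Finset.mem_insert_self _ _), hκ,
      ρ_potential hsrc]
  refine freeOver_of_perm ρ (Prod.mk_right_injective X.base) (fun a q => ?_) fun _ => ρ_loop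
  simpa [hp.base_eq_one] using ρ_walk a.2 q

end FreeOver

/-! ### Relative generators and the Euler characteristic -/

/-- The Euler characteristic of the underlying graph. -/
def eulerChar (X : PointedGraph V α) : ℤ := X.verts.card - X.edges.card

theorem verts_eq_of_edges_eq (h : X ≤ Z) (hE : X.edges = Z.edges) : X.verts = Z.verts := by
  refine (verts_subset_of_le h).antisymm fun v hv => ?_
  by_contra hvX
  obtain ⟨g, hg⟩ := Z.exists_walk v hv
  obtain ⟨e, he, -, hsrc | htgt⟩ :=
    hg.exists_edge_crossing (S := X.verts) (base_eq_of_le h ▸ X.base_mem) hvX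
  exacts [hsrc (X.src_mem e (hE ▸ he)), htgt (X.tgt_mem e (hE ▸ he))]

theorem exists_newEdge_adjacent (h : X ≤ Z) (hE : X.edges ≠ Z.edges) :
    ∃ e ∈ Z.edges, e ∉ X.edges ∧ (e.src ∈ X.verts ∨ e.tgt ∈ X.verts) := by
  obtain ⟨e, heZ, heX⟩ := Finset.exists_of_ssubset ((edges_subset_of_le h).ssubset_of_ne hE)
  by_cases hsrc : e.src ∈ X.verts
  · exact ⟨e, heZ, heX, .inl hsrc⟩
  obtain ⟨g, hg⟩ := Z.exists_walk _ (Z.src_mem e heZ)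
  obtain ⟨e', he'Z, hold, hnew⟩ :=
    hg.exists_edge_crossing (S := X.verts) (base_eq_of_le h ▸ X.base_mem) hsrc
  refine ⟨e', he'Z, fun he'X => ?_, hold⟩
  exact hnew.elim (· (X.src_mem e' he'X)) (· (X.tgt_mem e' he'X))

section InsertEdge

variable [DecidableEq V] [DecidableEq α] {he : e.src ∈ X.verts ∨ e.tgt ∈ X.verts}

theorem eulerChar_insertEdge_of_notMem (hnew : e.src ∉ X.verts ∨ e.tgt ∉ X.verts) :
    (X.insertEdge e he).eulerChar = X.eulerChar := by
  have heX : e ∉ X.edges := fun h => hnew.elim (· (X.src_mem e h)) (· (X.tgt_mem e h))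
  have card_verts : (insert e.src (insert e.tgt X.verts)).card = X.verts.card + 1 := by
    obtain hsrc | htgt := hnew
    · rw [Finset.insert_eq_of_mem (he.resolve_left hsrc), Finset.card_insert_of_notMem hsrc]
    · rw [Finset.insert_eq_of_mem (Finset.mem_insert_of_mem (he.resolve_right htgt)),
        Finset.card_insert_of_notMem htgt]
  simp only [eulerChar, insertEdge_verts, insertEdge_edges, card_verts,
    Finset.card_insert_of_notMem heX]
  push_cast
  ring

theorem verts_insertEdge_of_mem (hsrc : e.src ∈ X.verts) (htgt : e.tgt ∈ X.verts) :
    (X.insertEdge e he).verts = X.verts := by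
  rw [insertEdge_verts, Finset.insert_eq_of_mem htgt, Finset.insert_eq_of_mem hsrc]

theorem eulerChar_insertEdge_of_mem (hsrc : e.src ∈ X.verts) (htgt : e.tgt ∈ X.verts)
    (heX : e ∉ X.edges) : X.eulerChar = (X.insertEdge e he).eulerChar + 1 := by
  simp only [eulerChar, verts_insertEdge_of_mem hsrc htgt, insertEdge_edges,
    Finset.card_insert_of_notMem heX]
  push_cast
  ring

theorem eulerChar_le_insertEdge_add_one (hsrc : e.src ∈ X.verts) (htgt : e.tgt ∈ X.verts) :
    X.eulerChar ≤ (X.insertEdge e he).eulerChar + 1 := by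
  have h := Finset.card_insert_le e X.edges
  simp only [eulerChar, verts_insertEdge_of_mem hsrc htgt, insertEdge_edges]
  lia

end InsertEdge

theorem exists_relative_generators (h : X ≤ Z) :
    ∃ (m : ℕ) (c : Fin m → FreeGroup α), X.eulerChar = Z.eulerChar + m ∧
      Z.pi1 = X.pi1 ⊔ Subgroup.closure (Set.range c) ∧ (Folded Z.edges → FreeOver X.pi1 c) := by
  classical
  induction hn : (Z.edges \ X.edges).card using Nat.strong_induction_on generalizing X with
  | _ n ih =>
  by_cases hE : X.edges = Z.edges
  · have hverts := verts_eq_of_edges_eq h hE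
    have hpi1 : Z.pi1 = X.pi1 :=
      le_antisymm (pi1_mono ⟨(base_eq_of_le h).symm, hverts.ge, hE.ge⟩) (pi1_mono h)
    exact ⟨0, Fin.elim0, by simp [eulerChar, hE, hverts], by simp [hpi1],
      fun _ => freeOver_of_isEmpty _ _⟩
  obtain ⟨e, heZ, heX, hold⟩ := exists_newEdge_adjacent h hE
  have card_lt : (Z.edges \ (X.insertEdge e hold).edges).card < n := by
    rw [insertEdge_edges, Finset.sdiff_insert, ← hn]
    exact Finset.card_erase_lt_of_mem (Finset.mem_sdiff.mpr ⟨heZ, heX⟩)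
  obtain ⟨m, c, hm, hc, hfree⟩ := ih _ card_lt (insertEdge_le h heZ) rfl
  by_cases hnew : e.src ∉ X.verts ∨ e.tgt ∉ X.verts
  · rw [eulerChar_insertEdge_of_notMem hnew] at hm
    rw [pi1_insertEdge_of_notMem hnew] at hc hfree
    exact ⟨m, c, hm, hc, hfree⟩
  · rw [not_or, not_not, not_not] at hnew
    obtain ⟨hsrc, htgt⟩ := hnew
    obtain ⟨p, hp⟩ := X.exists_isPotential
    rw [pi1_insertEdge_of_walk hsrc htgt (hp.walk _ hsrc) (hp.walk _ htgt)] at hc hfree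
    refine ⟨m + 1, Fin.cons (p e.src * FreeGroup.of e.label * (p e.tgt)⁻¹) c, ?_, ?_, fun hZ => ?_⟩
    · rw [eulerChar_insertEdge_of_mem (he := hold) hsrc htgt heX, hm]
      push_cast
      ring
    · rw [hc, sup_closure_range_cons]
    · have hfold : Folded (insert e X.edges) :=
        hZ.mono (Finset.insert_subset heZ (edges_subset_of_le h))
      exact freeOver_cons_iff.mpr ⟨freeOver_of_folded_insert hfold heX hp hsrc htgt, hfree hZ⟩

theorem fg_pi1 (X : PointedGraph V α) : X.pi1.FG := by
  obtain ⟨m, c, -, hc, -⟩ := exists_relative_generators (point_base_le X)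
  rw [pi1_point, bot_sup_eq] at hc
  exact (Subgroup.fg_iff _).mpr ⟨_, hc.symm, Set.finite_range c⟩

/-! ### Realizing subgroups by graphs -/

section Realize

variable [Infinite V]

theorem exists_path (g : FreeGroup α) (X : PointedGraph V α) (hu : u ∈ X.verts) :
    ∃ (Y : PointedGraph V α) (v : V), X ≤ Y ∧ v ∈ Y.verts ∧ Walk Y.edges u g v ∧
      Y.pi1 = X.pi1 ∧ Y.eulerChar = X.eulerChar := by
  classical
  induction g using FreeGroup.induction_on generalizing X u with
  | C1 => exact ⟨X, u, le_rfl, hu, .nil, rfl, rfl⟩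
  | of x =>
    obtain ⟨n, hn⟩ := X.verts.exists_notMem
    let e : Edge V α := ⟨u, x, n⟩
    refine ⟨X.insertEdge e (.inl hu), n, le_insertEdge, by simp [e], ?_,
      pi1_insertEdge_of_notMem (.inr hn), eulerChar_insertEdge_of_notMem (.inr hn)⟩
    simpa using Walk.nil.fwd (e := e) (Finset.mem_insert_self _ _)
  | inv_of x _ =>
    obtain ⟨n, hn⟩ := X.verts.exists_notMem
    let e : Edge V α := ⟨n, x, u⟩
    refine ⟨X.insertEdge e (.inr hu), n, le_insertEdge, by simp [e], ?_,
      pi1_insertEdge_of_notMem (.inl hn), eulerChar_insertEdge_of_notMem (.inl hn)⟩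
    simpa using Walk.nil.bwd (e := e) (Finset.mem_insert_self _ _)
  | mul g h ihg ihh =>
    obtain ⟨Y, v, hXY, hv, hg, hY, hχY⟩ := ihg X hu
    obtain ⟨Z, w, hYZ, hw, hh, hZ, hχZ⟩ := ihh Y hv
    exact ⟨Z, w, hXY.trans hYZ, hw, (hg.mono (edges_subset_of_le hYZ)).trans hh, hZ.trans hY,
      hχZ.trans hχY⟩

theorem exists_wedge_loop (X : PointedGraph V α) (g : FreeGroup α) :
    ∃ Y : PointedGraph V α, X ≤ Y ∧ Y.pi1 = X.pi1 ⊔ Subgroup.closure {g} ∧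
      X.eulerChar ≤ Y.eulerChar + 1 := by
  classical
  obtain hnil | ⟨L, ⟨x, b⟩, hL⟩ := g.toWord.eq_nil_or_concat
  · exact ⟨X, le_rfl, by simp [FreeGroup.toWord_eq_nil_iff.mp hnil], by lia⟩
  have hg : g = FreeGroup.mk L * FreeGroup.mk [(x, b)] := by
    rw [← FreeGroup.mk_toWord (x := g), hL, List.concat_eq_append, FreeGroup.mul_mk]
  obtain ⟨Y, v, hXY, hv, hwalk, hY, hχY⟩ := X.exists_path (FreeGroup.mk L) X.base_mem
  rw [base_eq_of_le hXY] at hwalk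
  cases b
  · let e : Edge V α := ⟨Y.base, x, v⟩
    refine ⟨Y.insertEdge e (.inl Y.base_mem), hXY.trans le_insertEdge, ?_,
      hχY.symm.le.trans (eulerChar_le_insertEdge_add_one Y.base_mem hv)⟩
    rw [pi1_insertEdge_of_walk Y.base_mem hv .nil hwalk, hY, ← Subgroup.closure_singleton_inv, hg,
      one_mul, mul_inv_rev, inv_inv]
    rfl
  · let e : Edge V α := ⟨v, x, Y.base⟩
    refine ⟨Y.insertEdge e (.inl hv), hXY.trans le_insertEdge, ?_,
      hχY.symm.le.trans (eulerChar_le_insertEdge_add_one hv Y.base_mem)⟩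
    rw [pi1_insertEdge_of_walk hv Y.base_mem hwalk .nil, hY, hg, inv_one, mul_one]
    rfl

theorem exists_wedge (X : PointedGraph V α) {k : ℕ} (c : Fin k → FreeGroup α) :
    ∃ Y : PointedGraph V α, X ≤ Y ∧ Y.pi1 = X.pi1 ⊔ Subgroup.closure (Set.range c) ∧
      X.eulerChar ≤ Y.eulerChar + k := by
  induction k generalizing X with
  | zero => exact ⟨X, le_rfl, by simp, by simp⟩
  | succ k ih =>
    obtain ⟨Y, hXY, hY, hχY⟩ := X.exists_wedge_loop (c 0)
    obtain ⟨Z, hYZ, hZ, hχZ⟩ := ih Y (Fin.tail c)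
    refine ⟨Z, hXY.trans hYZ, ?_, by lia⟩
    rw [hZ, hY, ← sup_closure_range_cons, Fin.cons_self_tail]

theorem exists_pair_of_fg {A : Subgroup (FreeGroup α)} (hA : A.FG) {k : ℕ}
    (c : Fin k → FreeGroup α) :
    ∃ X Z : PointedGraph V α, X ≤ Z ∧ X.pi1 = A ∧
      Z.pi1 = A ⊔ Subgroup.closure (Set.range c) ∧ X.eulerChar ≤ Z.eulerChar + k := by
  obtain ⟨n, a, rfl⟩ := exists_fin_closure_eq hA
  obtain ⟨X, -, hX, -⟩ := (point α (Classical.arbitrary V)).exists_wedge a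
  rw [pi1_point, bot_sup_eq] at hX
  obtain ⟨Z, hXZ, hZ, hχ⟩ := X.exists_wedge c
  exact ⟨X, Z, hXZ, hX, hX ▸ hZ, hχ⟩

end Realize

end PointedGraph

/-! ### Stallings folds -/

/-- The edges `e₁` and `e₂` have the same label, one common endpoint, and distinct other endpoints
`v` and `w`; they become equal when `v` and `w` are identified. -/
inductive IsFold : Edge V α → Edge V α → V → V → Prop
  | tgt {u v w : V} {x : α} (h : v ≠ w) : IsFold ⟨u, x, v⟩ ⟨u, x, w⟩ v w
  | src {u v w : V} {x : α} (h : v ≠ w) : IsFold ⟨v, x, u⟩ ⟨w, x, u⟩ v w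

theorem exists_isFold (h : ¬Folded E) : ∃ e₁ ∈ E, ∃ e₂ ∈ E, ∃ v w, IsFold e₁ e₂ v w := by
  contrapose! h
  refine fun x => ⟨fun v w u hv hw => ?_, fun u v w hv hw => ?_⟩ <;> by_contra hvw
  exacts [h _ hv _ hw v w (.src hvw), h _ hv _ hw v w (.tgt hvw)]

namespace IsFold

variable {e₁ e₂ : Edge V α}

theorem symm (h : IsFold e₁ e₂ v w) : IsFold e₂ e₁ w v := by
  cases h with
  | tgt hvw => exact .tgt hvw.symm
  | src hvw => exact .src hvw.symm

theorem ne (h : IsFold e₁ e₂ v w) : v ≠ w := by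
  cases h <;> assumption

theorem edge_ne (h : IsFold e₁ e₂ v w) : e₁ ≠ e₂ := by
  cases h <;> simpa

theorem map_eq [DecidableEq V] (h : IsFold e₁ e₂ v w) :
    e₁.map (update id w v) = e₂.map (update id w v) := by
  cases h <;> simp [Edge.map, update_apply]

theorem walk (h : IsFold e₁ e₂ v w) (he₁ : e₁ ∈ E) (he₂ : e₂ ∈ E) : Walk E v 1 w := by
  have walk₁ := Walk.nil.fwd he₁
  have walk₂ := Walk.nil.fwd he₂
  cases h with
  | tgt => simpa using walk₁.symm.trans walk₂
  | src => simpa using walk₁.trans walk₂.symm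

variable {X Z : PointedGraph V α}

theorem mem_verts_left (h : IsFold e₁ e₂ v w) (he₁ : e₁ ∈ X.edges) : v ∈ X.verts := by
  cases h
  exacts [X.tgt_mem _ he₁, X.src_mem _ he₁]

theorem mem_verts_right (h : IsFold e₁ e₂ v w) (he₂ : e₂ ∈ X.edges) : w ∈ X.verts :=
  h.symm.mem_verts_left he₂

variable [DecidableEq V] [DecidableEq α]

theorem pi1_merge (h : IsFold e₁ e₂ v w) (he₁ : e₁ ∈ X.edges) (he₂ : e₂ ∈ X.edges) :
    (X.merge v w).pi1 = X.pi1 :=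
  PointedGraph.pi1_merge_of_walk_one (h.mem_verts_left he₁) (h.mem_verts_right he₂)
    (h.walk he₁ he₂)

theorem card_verts_merge_lt (h : IsFold e₁ e₂ v w) (he₁ : e₁ ∈ X.edges) (he₂ : e₂ ∈ X.edges) :
    (X.merge v w).verts.card < X.verts.card :=
  PointedGraph.card_verts_merge_lt (h.mem_verts_left he₁) h.ne (h.mem_verts_right he₂)

theorem eulerChar_le_merge (h : IsFold e₁ e₂ v w) (he₁ : e₁ ∈ X.edges) (he₂ : e₂ ∈ X.edges) :
    X.eulerChar ≤ (X.merge v w).eulerChar := by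
  have card_verts := Finset.card_erase_add_one (h.mem_verts_right he₂)
  have card_edges : (X.edges.image (Edge.map (update id w v))).card < X.edges.card :=
    Finset.card_image_le.lt_of_ne fun hcard =>
      h.edge_ne (Finset.card_image_iff.mp hcard he₁ he₂ h.map_eq)
  rw [← PointedGraph.verts_merge (h.mem_verts_left he₁) h.ne] at card_verts
  simp only [PointedGraph.eulerChar, PointedGraph.map_edges]
  lia

end IsFold

namespace PointedGraph

variable [DecidableEq V] [DecidableEq α] {X Z : PointedGraph V α} {e₁ e₂ : Edge V α}

theorem eulerChar_sub (h : X ≤ Z) :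
    X.eulerChar - Z.eulerChar = (Z.edges \ X.edges).card - (Z.verts \ X.verts).card := by
  have card_verts := Finset.card_sdiff_add_card_eq_card (verts_subset_of_le h)
  have card_edges := Finset.card_sdiff_add_card_eq_card (edges_subset_of_le h)
  simp only [eulerChar]
  lia

theorem card_newEdges_map_lt {W : Type*} [DecidableEq W] {φ : V → W} (he₁ : e₁ ∈ Z.edges)
    (he₂ : e₂ ∈ Z.edges) (hne : e₁ ≠ e₂) (hφ : e₁.map φ = e₂.map φ) (he₂X : e₂ ∉ X.edges) :
    ((Z.map φ).edges \ (X.map φ).edges).card < (Z.edges \ X.edges).card := by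
  have subset_image : (Z.map φ).edges \ (X.map φ).edges ⊆
      ((Z.edges \ X.edges).erase e₂).image (Edge.map φ) := by
    intro _ hnew
    obtain ⟨e, he, rfl⟩ := Finset.mem_image.mp (newEdges_map_subset φ hnew)
    obtain rfl | hee₂ := eq_or_ne e e₂
    · have he₁X : e₁ ∉ X.edges := fun h =>
        (Finset.mem_sdiff.mp hnew).2 (hφ ▸ Finset.mem_image_of_mem _ h)
      exact hφ ▸ Finset.mem_image_of_mem _ (by simp [hne, he₁, he₁X])
    · exact Finset.mem_image_of_mem _ (Finset.mem_erase.mpr ⟨hee₂, he⟩)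
  calc ((Z.map φ).edges \ (X.map φ).edges).card
    _ ≤ ((Z.edges \ X.edges).erase e₂).card :=
      (Finset.card_le_card subset_image).trans Finset.card_image_le
    _ < (Z.edges \ X.edges).card :=
      Finset.card_erase_lt_of_mem (Finset.mem_sdiff.mpr ⟨he₂, he₂X⟩)

theorem eulerChar_merge_add_le (hXZ : X ≤ Z) (hv : v ∈ X.verts) (hvw : v ≠ w) (hw : w ∈ X.verts) :
    (X.merge v w).eulerChar + Z.eulerChar ≤ X.eulerChar + (Z.merge v w).eulerChar := by
  have card_edges := (Finset.card_le_card (newEdges_map_subset (X := X) (Z := Z)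
    (update id w v))).trans Finset.card_image_le
  have hχ := eulerChar_sub hXZ
  have hχ_merge := eulerChar_sub (map_mono (update id w v) hXZ)
  rw [newVerts_merge_of_mem hXZ hv hvw hw] at hχ_merge
  lia

theorem eulerChar_merge_add_lt (hXZ : X ≤ Z) (hfold : IsFold e₁ e₂ v w) (he₁ : e₁ ∈ Z.edges)
    (he₂ : e₂ ∈ Z.edges) (hv : v ∈ X.verts) (hw : w ∈ X.verts)
    (hnew : ¬(e₁ ∈ X.edges ∧ e₂ ∈ X.edges)) :
    (X.merge v w).eulerChar + Z.eulerChar < X.eulerChar + (Z.merge v w).eulerChar := by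
  have card_edges : ((Z.merge v w).edges \ (X.merge v w).edges).card <
      (Z.edges \ X.edges).card := by
    obtain he₁X | he₂X := not_and_or.mp hnew
    · exact card_newEdges_map_lt he₂ he₁ hfold.edge_ne.symm hfold.map_eq.symm he₁X
    · exact card_newEdges_map_lt he₁ he₂ hfold.edge_ne hfold.map_eq he₂X
  have hχ := eulerChar_sub hXZ
  have hχ_merge := eulerChar_sub (map_mono (update id w v) hXZ)
  rw [newVerts_merge_of_mem hXZ hv hfold.ne hw] at hχ_merge
  lia

end PointedGraph

end Graph

/-! ### Admissible pairs of minimal rank -/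

section Admissible

variable {α : Type*} {Θ : FreeGroup α →* FreeGroup α} {B₀ K A B : Subgroup (FreeGroup α)} {k : ℕ}

/-- The pairs `(A, B)` among which the relative rank of `B` over `A` is minimized. -/
structure IsAdmissible (Θ : FreeGroup α →* FreeGroup α) (B₀ K A B : Subgroup (FreeGroup α)) :
    Prop where
  map_le : A.map Θ ≤ B
  base_le : B₀ ≤ B
  le : B ≤ K

/-- Some admissible pair `(A, B)` has `B` generated by `A` and `k` further elements. -/
def AdmissibleRank (Θ : FreeGroup α →* FreeGroup α) (B₀ K : Subgroup (FreeGroup α)) (k : ℕ) :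
    Prop :=
  ∃ (A : Subgroup (FreeGroup α)) (c : Fin k → FreeGroup α), A.FG ∧
    IsAdmissible Θ B₀ K A (A ⊔ Subgroup.closure (Set.range c))

theorem IsAdmissible.sup_closure (h : IsAdmissible Θ B₀ K A B) (hK : K.map Θ ≤ K)
    {s : Set (FreeGroup α)} (hs : s ⊆ B) :
    IsAdmissible Θ B₀ K (A ⊔ Subgroup.closure s) (B ⊔ Subgroup.closure (Θ '' s)) where
  map_le := by
    rw [Subgroup.map_sup, MonoidHom.map_closure]
    exact sup_le_sup_right h.map_le _
  base_le := h.base_le.trans le_sup_left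
  le := by
    rw [← MonoidHom.map_closure]
    exact sup_le h.le ((Subgroup.map_mono ((Subgroup.closure_le _).mpr (hs.trans h.le))).trans hK)

/-- A pair of nested graphs whose fundamental groups form an admissible pair, of relative Euler
characteristic at most `k`. -/
structure IsAdmissiblePair {V : Type*} (Θ : FreeGroup α →* FreeGroup α)
    (B₀ K : Subgroup (FreeGroup α)) (k : ℕ) (X Z : PointedGraph V α) : Prop where
  le : X ≤ Z
  eulerChar_le : X.eulerChar ≤ Z.eulerChar + k
  isAdmissible : IsAdmissible Θ B₀ K X.pi1 Z.pi1

namespace IsAdmissiblePair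

variable {V : Type*} {X Z : PointedGraph V α} {v w : V} {e₁ e₂ : Edge V α}

theorem eulerChar_eq (h : IsAdmissiblePair Θ B₀ K k X Z)
    (hmin : ∀ m < k, ¬AdmissibleRank Θ B₀ K m) : X.eulerChar = Z.eulerChar + k := by
  obtain ⟨m, c, hχ, hc, -⟩ := PointedGraph.exists_relative_generators h.le
  have hk : ¬m < k := fun hm => hmin m hm ⟨_, c, X.fg_pi1, hc ▸ h.isAdmissible⟩
  have hle := h.eulerChar_le
  lia

theorem isFreeExtension_of_folded (h : IsAdmissiblePair Θ B₀ K k X Z)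
    (hmin : ∀ m < k, ¬AdmissibleRank Θ B₀ K m) (hZ : Folded Z.edges) :
    IsFreeExtension X.pi1 Z.pi1 k := by
  obtain ⟨m, c, hχ, hc, hfree⟩ := PointedGraph.exists_relative_generators h.le
  obtain rfl : m = k := by
    have := h.eulerChar_eq hmin
    lia
  exact ⟨c, hc, hfree hZ⟩

section Merge

variable [DecidableEq V] [DecidableEq α]

theorem merge_of_notMem (h : IsAdmissiblePair Θ B₀ K k X Z) (hfold : IsFold e₁ e₂ v w)
    (he₁ : e₁ ∈ Z.edges) (he₂ : e₂ ∈ Z.edges) (hw : w ∉ X.verts) :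
    IsAdmissiblePair Θ B₀ K k X (Z.merge v w) where
  le := by
    rw [← PointedGraph.merge_of_notMem v hw]
    exact PointedGraph.map_mono _ h.le
  eulerChar_le := by
    have := h.eulerChar_le
    have := hfold.eulerChar_le_merge he₁ he₂
    lia
  isAdmissible := by
    rw [hfold.pi1_merge he₁ he₂]
    exact h.isAdmissible

theorem merge_of_mem (h : IsAdmissiblePair Θ B₀ K k X Z) (hfold : IsFold e₁ e₂ v w)
    (he₁ : e₁ ∈ X.edges) (he₂ : e₂ ∈ X.edges) :
    IsAdmissiblePair Θ B₀ K k (X.merge v w) (Z.merge v w) where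
  le := PointedGraph.map_mono _ h.le
  eulerChar_le := by
    have := h.eulerChar_le
    have := PointedGraph.eulerChar_merge_add_le h.le (hfold.mem_verts_left he₁) hfold.ne
      (hfold.mem_verts_right he₂)
    lia
  isAdmissible := by
    have hXZ := PointedGraph.edges_subset_of_le h.le
    rw [hfold.pi1_merge he₁ he₂, hfold.pi1_merge (hXZ he₁) (hXZ he₂)]
    exact h.isAdmissible

/-- A fold of `Z` that identifies two vertices of `X` through an edge outside `X` enlarges `π₁ X`
by some `l`. Attaching a loop `Θ l` to `Z` makes the folded pair admissible again, and the exchange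
argument carries freeness back to the original pair. -/
theorem exists_merge [Infinite V] (h : IsAdmissiblePair Θ B₀ K k X Z) (hΘ : Injective Θ)
    (hK : K.map Θ ≤ K) (hmin : ∀ m < k, ¬AdmissibleRank Θ B₀ K m) (hfold : IsFold e₁ e₂ v w)
    (he₁ : e₁ ∈ Z.edges) (he₂ : e₂ ∈ Z.edges) (hv : v ∈ X.verts) (hw : w ∈ X.verts)
    (hnew : ¬(e₁ ∈ X.edges ∧ e₂ ∈ X.edges)) :
    ∃ Y : PointedGraph V α, IsAdmissiblePair Θ B₀ K k (X.merge v w) Y ∧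
      (IsFreeExtension (X.merge v w).pi1 Y.pi1 k → IsFreeExtension X.pi1 Z.pi1 k) := by
  obtain ⟨p, hp⟩ := X.exists_isPotential
  set l := p v * (p w)⁻¹
  have hl : l ∈ Z.pi1 := by
    have hwalk {u : V} (hu : u ∈ X.verts) : Walk Z.edges Z.base (p u) u :=
      PointedGraph.base_eq_of_le h.le ▸ (hp.walk u hu).mono (PointedGraph.edges_subset_of_le h.le)
    simpa [l, PointedGraph.mem_pi1] using
      ((hwalk hv).trans (hfold.walk he₁ he₂)).trans (hwalk hw).symm
  have hX : (X.merge v w).pi1 = X.pi1 ⊔ Subgroup.closure {l} := PointedGraph.pi1_merge hp hv hw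
  obtain ⟨Y, hZY, hY, hχY⟩ := (Z.merge v w).exists_wedge_loop (Θ l)
  obtain ⟨m, d, hχd, hd, -⟩ :=
    PointedGraph.exists_relative_generators (PointedGraph.map_mono (update id w v) h.le)
  rw [hfold.pi1_merge he₁ he₂] at hY hd
  have hmk : m + 1 ≤ k := by
    have := h.eulerChar_le
    have := PointedGraph.eulerChar_merge_add_lt h.le hfold he₁ he₂ hv hw hnew
    lia
  have hadm := h.isAdmissible.sup_closure hK (Set.singleton_subset_iff.mpr hl)
  rw [Set.image_singleton, ← hX, ← hY] at hadm
  have hpair : IsAdmissiblePair Θ B₀ K k (X.merge v w) Y :=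
    ⟨(PointedGraph.map_mono _ h.le).trans hZY, by lia, hadm⟩
  obtain rfl : m + 1 = k := by
    have := hpair.eulerChar_eq hmin
    lia
  refine ⟨Y, hpair, fun hfree => ⟨Fin.cons l d, ?_, ?_⟩⟩
  · rw [sup_closure_range_cons, ← hX, hd]
  · rw [hX] at hd
    rw [hX, hY] at hfree
    exact freeOver_cons_of_isFreeExtension hΘ X.fg_pi1 h.isAdmissible.map_le hd hfree

end Merge

theorem isFreeExtension [Infinite V] (hΘ : Injective Θ) (hK : K.map Θ ≤ K)
    (hmin : ∀ m < k, ¬AdmissibleRank Θ B₀ K m) {X Z : PointedGraph V α}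
    (h : IsAdmissiblePair Θ B₀ K k X Z) : IsFreeExtension X.pi1 Z.pi1 k := by
  classical
  by_cases hZ : Folded Z.edges
  · exact h.isFreeExtension_of_folded hmin hZ
  obtain ⟨e₁, he₁, e₂, he₂, v, w, hfold⟩ := exists_isFold hZ
  by_cases hw : w ∉ X.verts
  · have := hfold.card_verts_merge_lt he₁ he₂
    exact hfold.pi1_merge he₁ he₂ ▸
      isFreeExtension hΘ hK hmin (h.merge_of_notMem hfold he₁ he₂ hw)
  by_cases hv : v ∉ X.verts
  · have := hfold.symm.card_verts_merge_lt he₂ he₁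
    exact hfold.symm.pi1_merge he₂ he₁ ▸
      isFreeExtension hΘ hK hmin (h.merge_of_notMem hfold.symm he₂ he₁ hv)
  rw [not_not] at hv hw
  have := PointedGraph.card_verts_merge_lt hv hfold.ne hw
  by_cases hX : e₁ ∈ X.edges ∧ e₂ ∈ X.edges
  · have hfree := isFreeExtension hΘ hK hmin (h.merge_of_mem hfold hX.1 hX.2)
    rwa [hfold.pi1_merge hX.1 hX.2, hfold.pi1_merge he₁ he₂] at hfree
  · obtain ⟨Y, hY, hfree⟩ := h.exists_merge hΘ hK hmin hfold he₁ he₂ hv hw hX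
    exact hfree (isFreeExtension hΘ hK hmin hY)
termination_by (X.verts.card, Z.verts.card)

end IsAdmissiblePair

theorem IsAdmissible.freeOver_of_forall_not_admissibleRank (hΘ : Injective Θ) (hK : K.map Θ ≤ K)
    (hmin : ∀ m < k, ¬AdmissibleRank Θ B₀ K m) (hA : A.FG) {c : Fin k → FreeGroup α}
    (h : IsAdmissible Θ B₀ K A (A ⊔ Subgroup.closure (Set.range c))) : FreeOver A c := by
  classical
  obtain ⟨X, Z, hXZ, rfl, hZ, hχ⟩ := PointedGraph.exists_pair_of_fg (V := ℕ) hA c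
  rw [← hZ] at h
  obtain ⟨d, hd, hfree⟩ := IsAdmissiblePair.isFreeExtension hΘ hK hmin ⟨hXZ, hχ, h⟩
  exact hfree.of_sup_eq_sup hA (hd.symm.trans hZ)

end Admissible

/-! ### Bases of invariant subgroups -/

theorem finite_of_fg_freeGroup (β : Type*) [Group.FG (FreeGroup β)] : Finite β := by
  have : Group.FG (Abelianization (FreeGroup β)) :=
    Group.fg_of_surjective (f := Abelianization.of) (QuotientGroup.mk'_surjective _)
  have : AddGroup.FG (FreeAbelianGroup β) := AddGroup.fg_iff_mul_fg.mpr this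
  have : Module.Finite ℤ (FreeAbelianGroup β) := Module.Finite.iff_addGroup_fg.mpr this
  exact Module.Finite.finite_basis (FreeAbelianGroup.basis β)

theorem exists_fin_basis {α : Type*} {A : Subgroup (FreeGroup α)} (hA : A.FG) :
    ∃ (m : ℕ) (a : Fin m → FreeGroup α),
      A = Subgroup.closure (Set.range a) ∧ Injective (FreeGroup.lift a) := by
  let e := IsFreeGroup.toFreeGroup A
  have : Group.FG A := (Group.fg_iff_subgroup_fg A).mpr hA
  have : Group.FG (FreeGroup (IsFreeGroup.Generators A)) :=
    Group.fg_of_surjective (f := e.toMonoidHom) e.surjective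
  have : Finite (IsFreeGroup.Generators A) := finite_of_fg_freeGroup _
  obtain ⟨m, ⟨r⟩⟩ := Finite.exists_equiv_fin (IsFreeGroup.Generators A)
  let e' : FreeGroup (Fin m) ≃* A := (FreeGroup.freeGroupCongr r.symm).trans e.symm
  have lift_eq : FreeGroup.lift (fun i => (e' (FreeGroup.of i) : FreeGroup α)) =
      A.subtype.comp e'.toMonoidHom := FreeGroup.ext_hom _ _ fun i => by simp
  refine ⟨m, fun i => e' (FreeGroup.of i), ?_, ?_⟩
  · rw [← FreeGroup.range_lift_eq_closure, lift_eq, MonoidHom.range_comp,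
      MonoidHom.range_eq_top.mpr e'.surjective, ← MonoidHom.range_eq_map, Subgroup.range_subtype]
  · rw [lift_eq]
    exact A.subtype_injective.comp e'.injective

section Tower

variable {Γ Δ ι : Type*} [Group Γ] [Group Δ] {A : Subgroup Γ} {c : ℕ → ι → Γ}

/-- The subgroup generated by `A` and the families `c 0, …, c (n - 1)`. -/
def tower (A : Subgroup Γ) (c : ℕ → ι → Γ) : ℕ → Subgroup Γ
  | 0 => A
  | n + 1 => tower A c n ⊔ Subgroup.closure (Set.range (c n))

theorem tower_monotone : Monotone (tower A c) :=
  monotone_nat_of_le_succ fun _ => le_sup_left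

theorem fg_tower [Finite ι] (hA : A.FG) (n : ℕ) : (tower A c n).FG := by
  induction n with
  | zero => exact hA
  | succ n ih => exact ih.sup ((Subgroup.fg_iff _).mpr ⟨_, rfl, Set.finite_range _⟩)

theorem map_tower (f : Γ →* Δ) (n : ℕ) :
    (tower A c n).map f = tower (A.map f) (fun n => f ∘ c n) n := by
  induction n with
  | zero => rfl
  | succ n ih => rw [tower, tower, Subgroup.map_sup, ih, MonoidHom.map_closure, Set.range_comp]

theorem injOn_tower {f : Γ →* Δ} (hA : Set.InjOn f A)
    (hfree : ∀ n, FreeOver (tower (A.map f) (fun n => f ∘ c n) n) (f ∘ c n)) (n : ℕ) :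
    Set.InjOn f (tower A c n) := by
  induction n with
  | zero => exact hA
  | succ n ih => exact FreeOver.injOn_sup ih (map_tower f n ▸ hfree n)

theorem injective_of_freeOver_tower {f : Γ →* Δ} (hA : Set.InjOn f A)
    (hfree : ∀ n, FreeOver (tower (A.map f) (fun n => f ∘ c n) n) (f ∘ c n))
    (htop : ⨆ n, tower A c n = ⊤) : Injective f := by
  have exists_mem (x : Γ) : ∃ n, x ∈ tower A c n := by
    rw [← Subgroup.mem_iSup_of_directed tower_monotone.directed_le, htop]
    trivial
  intro x y hxy
  obtain ⟨m, hm⟩ := exists_mem x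
  obtain ⟨n, hn⟩ := exists_mem y
  exact injOn_tower hA hfree (max m n) (tower_monotone (le_max_left m n) hm)
    (tower_monotone (le_max_right m n) hn) hxy

theorem injective_lift_of_freeOver_tower {σ : Type*} {a : σ → Γ} (ha : Injective (FreeGroup.lift a))
    (hfree : ∀ n, FreeOver (tower (Subgroup.closure (Set.range a)) c n) (c n)) :
    Injective (FreeGroup.lift (Sum.elim a fun z : ι × ℕ => c z.2 z.1)) := by
  set f := FreeGroup.lift (Sum.elim a fun z : ι × ℕ => c z.2 z.1)
  let i : FreeGroup σ →* FreeGroup (σ ⊕ ι × ℕ) := FreeGroup.map Sum.inl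
  let letters (n : ℕ) (l : ι) : FreeGroup (σ ⊕ ι × ℕ) := FreeGroup.of (.inr (l, n))
  have comp_i : f.comp i = FreeGroup.lift a := FreeGroup.ext_hom _ _ fun s => by simp [f, i]
  have comp_letters (n : ℕ) : f ∘ letters n = c n := funext fun l => by simp [f, letters]
  refine injective_of_freeOver_tower (A := i.range) (c := letters) ?_ ?_ (eq_top_iff.mpr ?_)
  · rintro _ ⟨x, rfl⟩ _ ⟨y, rfl⟩ hxy
    exact congrArg i (ha (by rw [← comp_i]; exact hxy))
  · rw [← MonoidHom.range_comp, comp_i, FreeGroup.range_lift_eq_closure]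
    simpa only [comp_letters] using hfree
  · rw [← FreeGroup.closure_range_of, Subgroup.closure_le]
    rintro _ ⟨s | ⟨l, n⟩, rfl⟩
    · exact le_iSup (tower i.range letters) 0 ⟨FreeGroup.of s, FreeGroup.map.of⟩
    · refine le_iSup (tower i.range letters) (n + 1) ?_
      exact le_sup_right (a := tower i.range letters n) (Subgroup.subset_closure ⟨l, rfl⟩)

end Tower

section Basis

variable {α : Type*} {Θ : FreeGroup α →* FreeGroup α} {B₀ K A : Subgroup (FreeGroup α)} {k : ℕ}

theorem isAdmissible_tower {c : Fin k → FreeGroup α}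
    (h : IsAdmissible Θ B₀ K A (A ⊔ Subgroup.closure (Set.range c))) (hK : K.map Θ ≤ K) (n : ℕ) :
    IsAdmissible Θ B₀ K (tower A (fun n => Θ^[n] ∘ c) n)
      (tower A (fun n => Θ^[n] ∘ c) (n + 1)) := by
  induction n with
  | zero => exact h
  | succ n ih =>
    have hsub : Set.range (Θ^[n] ∘ c) ⊆ tower A (fun n => Θ^[n] ∘ c) (n + 1) :=
      Set.Subset.trans Subgroup.subset_closure
        (le_sup_right (a := tower A (fun n => Θ^[n] ∘ c) n))
    have hstep := ih.sup_closure hK hsub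
    rwa [← Set.range_comp, ← comp_assoc, ← iterate_succ'] at hstep

theorem exists_admissibleRank (hB₀ : B₀.FG) (hle : B₀ ≤ K) : ∃ k, AdmissibleRank Θ B₀ K k := by
  obtain ⟨n, s, rfl⟩ := exists_fin_closure_eq hB₀
  exact ⟨n, ⊥, s, Subgroup.FG.bot, by simp, by simp, by simpa using hle⟩

theorem exists_invariant_basis (hΘ : Injective Θ) (hB₀ : B₀.FG) (hle : B₀ ≤ K)
    (hK : K.map Θ ≤ K) :
    ∃ (m k : ℕ) (a : Fin m → FreeGroup α) (c : Fin k → FreeGroup α),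
      (∀ i, Θ (a i) ∈ Subgroup.closure (Set.range (Sum.elim a c))) ∧
      B₀ ≤ Subgroup.closure (Set.range (Sum.elim a c)) ∧
      Subgroup.closure (Set.range (Sum.elim a c)) ≤ K ∧
      Injective (FreeGroup.lift (Sum.elim a fun z : Fin k × ℕ => Θ^[z.2] (c z.1))) := by
  classical
  have hex := exists_admissibleRank (Θ := Θ) hB₀ hle
  obtain ⟨A, c, hA, h⟩ := Nat.find_spec hex
  have hmin : ∀ m < Nat.find hex, ¬AdmissibleRank Θ B₀ K m := fun _ => Nat.find_min hex
  have hfree (n : ℕ) : FreeOver (tower A (fun n => Θ^[n] ∘ c) n) (Θ^[n] ∘ c) :=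
    IsAdmissible.freeOver_of_forall_not_admissibleRank hΘ hK hmin (fg_tower hA n)
      (isAdmissible_tower h hK n)
  obtain ⟨m, a, rfl, ha⟩ := exists_fin_basis hA
  rw [← Subgroup.closure_union, ← Set.Sum.elim_range] at h
  exact ⟨m, _, a, c, fun i => h.map_le ⟨a i, Subgroup.subset_closure ⟨i, rfl⟩, rfl⟩, h.base_le,
    h.le, injective_lift_of_freeOver_tower ha hfree⟩

end Basis

/-! ### Presentations of ascending HNN extensions -/

section NormalForm

variable {E E' : Type*} [Group E] [Group E'] {t : E} {N : Subgroup E}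

theorem pow_mul_mul_pow_inv_mem (hN : ∀ g ∈ N, t * g * t⁻¹ ∈ N) {g : E} (hg : g ∈ N) (p : ℕ) :
    t ^ p * g * (t ^ p)⁻¹ ∈ N := by
  induction p with
  | zero => simpa using hg
  | succ p ih => simpa [pow_succ', mul_assoc] using hN _ ih

theorem exists_eq_pow_inv_mul_mul_pow (hN : ∀ g ∈ N, t * g * t⁻¹ ∈ N) {x : E}
    (hx : x ∈ N ⊔ Subgroup.zpowers t) :
    ∃ (p q : ℕ) (g : E), g ∈ N ∧ x = (t ^ p)⁻¹ * g * t ^ q := by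
  have mul_left : ∀ n ∈ N, ∀ y : E, (∃ (p q : ℕ) (g : E), g ∈ N ∧ y = (t ^ p)⁻¹ * g * t ^ q) →
      ∃ (p q : ℕ) (g : E), g ∈ N ∧ n * y = (t ^ p)⁻¹ * g * t ^ q := by
    rintro n hn _ ⟨p, q, g, hg, rfl⟩
    exact ⟨p, q, _, mul_mem (pow_mul_mul_pow_inv_mem hN hn p) hg, by group⟩
  rw [← N.closure_eq, Subgroup.zpowers_eq_closure, ← Subgroup.closure_union] at hx
  induction hx using Subgroup.closure_induction_left with
  | one => exact ⟨0, 0, 1, one_mem _, by simp⟩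
  | mul_left x hx y _ ih =>
    rcases hx with hx | rfl
    · exact mul_left x hx _ ih
    · obtain ⟨_ | p, q, g, hg, rfl⟩ := ih
      · exact ⟨0, q + 1, _, hN g hg, by rw [pow_succ']; group⟩
      · exact ⟨p, q, g, hg, by rw [pow_succ]; group⟩
  | inv_mul_cancel x hx y _ ih =>
    rcases hx with hx | rfl
    · exact mul_left x⁻¹ (inv_mem hx) _ ih
    · obtain ⟨p, q, g, hg, rfl⟩ := ih
      exact ⟨p + 1, q, g, hg, by rw [pow_succ]; group⟩

theorem injective_of_injOn_of_sup_zpowers_eq_top (hN : ∀ g ∈ N, t * g * t⁻¹ ∈ N)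
    (htop : N ⊔ Subgroup.zpowers t = ⊤) {f : E →* E'} (hf : Set.InjOn f N)
    {χ : E' →* Multiplicative ℤ} (hχN : ∀ g ∈ N, χ (f g) = 1)
    (hχt : χ (f t) = Multiplicative.ofAdd 1) : Injective f := by
  rw [injective_iff_map_eq_one]
  intro x hx
  obtain ⟨p, q, g, hg, rfl⟩ :=
    exists_eq_pow_inv_mul_mul_pow (x := x) hN (htop ▸ Subgroup.mem_top x)
  have hpq : p = q := by
    have := congrArg χ hx
    simp only [map_mul, map_inv, map_pow, hχt, hχN g hg, map_one, mul_one, inv_mul_eq_one,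
      ← ofAdd_nsmul] at this
    simpa using this
  subst hpq
  have hfg : f g = f 1 := by
    rw [map_mul, map_mul, map_inv, mul_eq_one_iff_eq_inv, inv_mul_eq_iff_eq_mul,
      mul_inv_cancel] at hx
    rw [hx, map_one]
  rw [hf hg (one_mem N) hfg, mul_one, inv_mul_cancel]

end NormalForm

section PartialTorus

variable {σ κ : Type*}

/-- The relator `t aᵢ t⁻¹ wᵢ⁻¹`, where `aᵢ` (`i : σ`) and `c_l` (`l : κ`) are the letters of the
alphabet `σ ⊕ κ`, the word `wᵢ` is written in them, and `none` stands for `t`. -/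
def relator (w : σ → FreeGroup (σ ⊕ κ)) (i : σ) : FreeGroup (Option (σ ⊕ κ)) :=
  FreeGroup.of none * FreeGroup.of (some (Sum.inl i)) * (FreeGroup.of none)⁻¹ *
    (FreeGroup.map some (w i))⁻¹

/-- The group `⟨t, aᵢ, c_l | t aᵢ t⁻¹ = wᵢ⟩`: the stable letter conjugates the `aᵢ` to prescribed
words, and its action on the `c_l` is unconstrained. -/
abbrev PartialTorus (w : σ → FreeGroup (σ ⊕ κ)) : Type _ :=
  PresentedGroup (Set.range (relator w))

namespace PartialTorus

variable (w : σ → FreeGroup (σ ⊕ κ))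

/-- The stable letter `t`. -/
def stable : PartialTorus w := PresentedGroup.of none

/-- The tautological map from the free group on the letters `aᵢ`, `c_l`. -/
def base : FreeGroup (σ ⊕ κ) →* PartialTorus w :=
  (PresentedGroup.mk _).comp (FreeGroup.map some)

theorem stable_mul_base_mul_inv (i : σ) :
    stable w * base w (FreeGroup.of (Sum.inl i)) * (stable w)⁻¹ = base w (w i) := by
  have hone : PresentedGroup.mk (Set.range (relator w)) (relator w i) = 1 :=
    PresentedGroup.one_of_mem ⟨i, rfl⟩
  rw [relator, map_mul, map_inv, mul_inv_eq_one, map_mul, map_mul, map_inv] at hone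
  simpa only [stable, PresentedGroup.of, base, MonoidHom.comp_apply, FreeGroup.map.of] using hone

theorem range_base_sup_zpowers_stable :
    (base w).range ⊔ Subgroup.zpowers (stable w) = ⊤ := by
  rw [eq_top_iff, ← PresentedGroup.closure_range_of, Subgroup.closure_le]
  rintro _ ⟨_ | x, rfl⟩
  · exact Subgroup.mem_sup_right (Subgroup.mem_zpowers _)
  · exact Subgroup.mem_sup_left ⟨FreeGroup.of x, by simp [base, PresentedGroup.of]⟩

/-- The homomorphism `aᵢ ↦ aᵢ`, `(c_l, j) ↦ tʲ c_l t⁻ʲ`, whose image is the subgroup generated by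
the conjugates of the letters by nonnegative powers of `t`. -/
def spread : FreeGroup (σ ⊕ κ × ℕ) →* PartialTorus w :=
  FreeGroup.lift (Sum.elim (fun i => base w (FreeGroup.of (Sum.inl i))) fun z =>
    stable w ^ z.2 * base w (FreeGroup.of (Sum.inr z.1)) * (stable w ^ z.2)⁻¹)

theorem range_base_le_range_spread : (base w).range ≤ (spread w).range := by
  rw [MonoidHom.range_eq_map, ← FreeGroup.closure_range_of, MonoidHom.map_closure,
    Subgroup.closure_le]
  rintro _ ⟨_, ⟨i | l, rfl⟩, rfl⟩
  · exact ⟨FreeGroup.of (Sum.inl i), by simp [spread]⟩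
  · exact ⟨FreeGroup.of (Sum.inr (l, 0)), by simp [spread]⟩

theorem stable_mul_mul_inv_mem_range_spread {g : PartialTorus w} (hg : g ∈ (spread w).range) :
    stable w * g * (stable w)⁻¹ ∈ (spread w).range := by
  suffices (spread w).range ≤ (spread w).range.comap (MulAut.conj (stable w)).toMonoidHom from
    this hg
  conv_lhs => rw [MonoidHom.range_eq_map, ← FreeGroup.closure_range_of, MonoidHom.map_closure]
  rw [Subgroup.closure_le]
  rintro _ ⟨_, ⟨i | ⟨l, j⟩, rfl⟩, rfl⟩
  · apply range_base_le_range_spread w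
    exact ⟨w i, by simp [spread, ← stable_mul_base_mul_inv]⟩
  · exact ⟨FreeGroup.of (Sum.inr (l, j + 1)), by simp [spread, pow_succ', mul_assoc]⟩

variable {w} {E : Type*} [Group E] {x : σ ⊕ κ → E} {t : E}

theorem lift_elim_map_some (v : FreeGroup (σ ⊕ κ)) :
    FreeGroup.lift (fun o : Option (σ ⊕ κ) => o.elim t x) (FreeGroup.map some v) =
      FreeGroup.lift x v := by
  suffices (FreeGroup.lift (fun o : Option (σ ⊕ κ) => o.elim t x)).comp (FreeGroup.map some) =
    FreeGroup.lift x from DFunLike.congr_fun this v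
  ext y
  simp

/-- The homomorphism determined by the images of the letters, subject to the defining relations. -/
def desc (h : ∀ i, t * x (Sum.inl i) * t⁻¹ = FreeGroup.lift x (w i)) : PartialTorus w →* E :=
  PresentedGroup.toGroup (f := fun o : Option (σ ⊕ κ) => o.elim t x) <| by
    rintro _ ⟨i, rfl⟩
    simpa [relator, lift_elim_map_some, mul_inv_eq_one] using h i

section

variable (h : ∀ i, t * x (Sum.inl i) * t⁻¹ = FreeGroup.lift x (w i))

@[simp]
theorem desc_stable : desc h (stable w) = t :=
  PresentedGroup.toGroup.of _

@[simp]
theorem desc_base (v : FreeGroup (σ ⊕ κ)) : desc h (base w v) = FreeGroup.lift x v :=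
  lift_elim_map_some v

theorem desc_comp_spread :
    (desc h).comp (spread w) = FreeGroup.lift
      (Sum.elim (x ∘ Sum.inl) fun z => t ^ z.2 * x (Sum.inr z.1) * (t ^ z.2)⁻¹) := by
  ext (i | z) <;> simp [spread]

theorem range_desc : (desc h).range = Subgroup.closure (Set.range x) ⊔ Subgroup.zpowers t := by
  have hbase : (base w).range.map (desc h) = Subgroup.closure (Set.range x) := by
    rw [MonoidHom.range_eq_map, Subgroup.map_map, ← MonoidHom.range_eq_map,
      ← FreeGroup.range_lift_eq_closure]
    congr 1
    ext y
    simp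
  rw [MonoidHom.range_eq_map, ← range_base_sup_zpowers_stable, Subgroup.map_sup, hbase,
    MonoidHom.map_zpowers, desc_stable]

theorem injective_desc {χ : E →* Multiplicative ℤ} (hχt : χ t = Multiplicative.ofAdd 1)
    (hχx : ∀ y, χ (x y) = 1)
    (hfree : Injective (FreeGroup.lift
      (Sum.elim (x ∘ Sum.inl) fun z : κ × ℕ => t ^ z.2 * x (Sum.inr z.1) * (t ^ z.2)⁻¹))) :
    Injective (desc h) := by
  have hinj : Injective ((desc h).comp (spread w)) := by rwa [desc_comp_spread]
  have hχ : (χ.comp (desc h)).comp (spread w) = 1 := by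
    ext (i | z) <;> simp [spread, hχx]
  refine injective_of_injOn_of_sup_zpowers_eq_top (χ := χ)
    (fun _ => stable_mul_mul_inv_mem_range_spread w) ?_ ?_ ?_ ?_
  · exact eq_top_iff.2 <| (range_base_sup_zpowers_stable w).ge.trans <|
      sup_le_sup_right (range_base_le_range_spread w) _
  · rintro _ ⟨y, rfl⟩ _ ⟨z, rfl⟩ hyz
    rw [hinj hyz]
  · rintro _ ⟨y, rfl⟩
    exact DFunLike.congr_fun hχ y
  · rw [desc_stable, hχt]

end

end PartialTorus

theorem isFinitelyPresented_closure_sup_zpowers [Finite σ] [Finite κ] {E : Type*} [Group E]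
    {x : σ ⊕ κ → E} {t : E}
    (hconj : ∀ i, t * x (Sum.inl i) * t⁻¹ ∈ Subgroup.closure (Set.range x))
    {χ : E →* Multiplicative ℤ} (hχt : χ t = Multiplicative.ofAdd 1) (hχx : ∀ y, χ (x y) = 1)
    (hfree : Injective (FreeGroup.lift
      (Sum.elim (x ∘ Sum.inl) fun z : κ × ℕ => t ^ z.2 * x (Sum.inr z.1) * (t ^ z.2)⁻¹))) :
    Group.IsFinitelyPresented ↥(Subgroup.closure (Set.range x) ⊔ Subgroup.zpowers t) := by
  simp only [← FreeGroup.range_lift_eq_closure, MonoidHom.mem_range] at hconj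
  choose w hw using hconj
  rw [← PartialTorus.range_desc fun i => (hw i).symm]
  have : Finite (Set.range (relator w)) := Set.finite_range _
  exact Group.IsFinitelyPresented.equiv
    (MonoidHom.ofInjective (PartialTorus.injective_desc (fun i => (hw i).symm) hχt hχx hfree))

end PartialTorus

section AscendingHNN

variable {α : Type*} {Θ : FreeGroup α →* FreeGroup α} (hΘ : Injective Θ)

/-- The ascending HNN extension `⟨t, FreeGroup α | t x t⁻¹ = Θ x⟩` of an injective endomorphism. -/
abbrev AscendingHNN : Type _ :=
  HNNExtension (FreeGroup α) ⊤ Θ.range (Subgroup.topEquiv.trans (MonoidHom.ofInjective hΘ))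

namespace AscendingHNN

theorem t_mul_of_mul_inv (x : FreeGroup α) :
    (HNNExtension.t * HNNExtension.of x * HNNExtension.t⁻¹ : AscendingHNN hΘ) =
      HNNExtension.of (Θ x) :=
  (HNNExtension.equiv_eq_conj (φ := Subgroup.topEquiv.trans (MonoidHom.ofInjective hΘ))
    ⟨x, Subgroup.mem_top x⟩).symm

theorem t_pow_mul_of_mul_inv (x : FreeGroup α) (n : ℕ) :
    (HNNExtension.t ^ n * HNNExtension.of x * (HNNExtension.t ^ n)⁻¹ : AscendingHNN hΘ) =
      HNNExtension.of (Θ^[n] x) := by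
  induction n with
  | zero => simp
  | succ n ih =>
    rw [iterate_succ_apply', ← t_mul_of_mul_inv, ← ih, pow_succ']
    group

theorem range_of_sup_zpowers_t :
    (HNNExtension.of : FreeGroup α →* AscendingHNN hΘ).range ⊔
      Subgroup.zpowers HNNExtension.t = ⊤ := by
  refine eq_top_iff.2 fun x _ => ?_
  induction x using HNNExtension.induction_on with
  | of g => exact Subgroup.mem_sup_left ⟨g, rfl⟩
  | t => exact Subgroup.mem_sup_right (Subgroup.mem_zpowers _)
  | mul x y hx hy => exact mul_mem (hx trivial) (hy trivial)
  | inv x hx => exact inv_mem (hx trivial)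

/-- The exponent sum of the stable letter. -/
noncomputable def degree : AscendingHNN hΘ →* Multiplicative ℤ :=
  HNNExtension.lift 1 (Multiplicative.ofAdd 1) (by simp)

theorem exists_normal_form (x : AscendingHNN hΘ) :
    ∃ (p q : ℕ) (g : FreeGroup α),
      x = (HNNExtension.t ^ p)⁻¹ * HNNExtension.of g * HNNExtension.t ^ q := by
  have hrange : ∀ g ∈ (HNNExtension.of : FreeGroup α →* AscendingHNN hΘ).range,
      HNNExtension.t * g * HNNExtension.t⁻¹ ∈
        (HNNExtension.of : FreeGroup α →* AscendingHNN hΘ).range := by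
    rintro _ ⟨g, rfl⟩
    exact ⟨_, (t_mul_of_mul_inv hΘ g).symm⟩
  obtain ⟨p, q, _, ⟨g, rfl⟩, hx⟩ := exists_eq_pow_inv_mul_mul_pow (x := x) hrange
    (range_of_sup_zpowers_t hΘ ▸ Subgroup.mem_top x)
  exact ⟨p, q, g, hx⟩

variable {hΘ} {H : Subgroup (AscendingHNN hΘ)}

theorem map_comap_of_le (ht : HNNExtension.t ∈ H) :
    (H.comap HNNExtension.of).map Θ ≤ H.comap HNNExtension.of := by
  rintro _ ⟨x, hx, rfl⟩
  rw [Subgroup.mem_comap, ← t_mul_of_mul_inv]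
  exact mul_mem (mul_mem ht hx) (inv_mem ht)

theorem exists_fg_le_map_of_sup_zpowers (hH : H.FG) (ht : HNNExtension.t ∈ H) :
    ∃ B : Subgroup (FreeGroup α), B.FG ∧ B ≤ H.comap HNNExtension.of ∧
      H ≤ B.map HNNExtension.of ⊔ Subgroup.zpowers HNNExtension.t := by
  obtain ⟨n, s, rfl⟩ := exists_fin_closure_eq hH
  choose p q g hs using fun i => exists_normal_form hΘ (s i)
  refine ⟨Subgroup.closure (Set.range g),
    (Subgroup.fg_iff _).2 ⟨_, rfl, Set.finite_range g⟩, ?_, ?_⟩ <;> rw [Subgroup.closure_le]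
  · rintro _ ⟨i, rfl⟩
    have hg : HNNExtension.of (g i) = HNNExtension.t ^ p i * s i * (HNNExtension.t ^ q i)⁻¹ := by
      rw [hs]
      group
    rw [SetLike.mem_coe, Subgroup.mem_comap, hg]
    exact mul_mem (mul_mem (pow_mem ht _) (Subgroup.subset_closure ⟨i, rfl⟩))
      (inv_mem (pow_mem ht _))
  · rintro _ ⟨i, rfl⟩
    rw [SetLike.mem_coe, hs]
    have ht' := Subgroup.mem_sup_right (S := (Subgroup.closure (Set.range g)).map HNNExtension.of)
      (Subgroup.mem_zpowers (HNNExtension.t : AscendingHNN hΘ))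
    exact mul_mem (mul_mem (inv_mem (pow_mem ht' _)) (Subgroup.mem_sup_left
      ⟨_, Subgroup.subset_closure ⟨i, rfl⟩, rfl⟩)) (pow_mem ht' _)

theorem isFinitelyPresented_of_t_mem (hH : H.FG) (ht : HNNExtension.t ∈ H) :
    Group.IsFinitelyPresented H := by
  obtain ⟨B, hB, hBH, hHB⟩ := exists_fg_le_map_of_sup_zpowers hH ht
  obtain ⟨m, k, a, c, hΘa, hBac, hacH, hfree⟩ :=
    exists_invariant_basis hΘ hB hBH (map_comap_of_le ht)
  let x : Fin m ⊕ Fin k → AscendingHNN hΘ := HNNExtension.of ∘ Sum.elim a c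
  have hx : Subgroup.closure (Set.range x) =
      (Subgroup.closure (Set.range (Sum.elim a c))).map HNNExtension.of := by
    rw [MonoidHom.map_closure, Set.range_comp]
  have hHx : H = Subgroup.closure (Set.range x) ⊔ Subgroup.zpowers HNNExtension.t := by
    rw [hx]
    exact le_antisymm (hHB.trans (sup_le_sup_right (Subgroup.map_mono hBac) _))
      (sup_le (Subgroup.map_le_iff_le_comap.2 hacH) (Subgroup.zpowers_le.2 ht))
  rw [hHx]
  refine isFinitelyPresented_closure_sup_zpowers (χ := degree hΘ) (fun i => ?_)
    (HNNExtension.lift_t _ _ _) (fun y => HNNExtension.lift_of _ _ _ _) ?_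
  · simp only [x, comp_apply, Sum.elim_inl, t_mul_of_mul_inv]
    exact hx ▸ ⟨_, hΘa i, rfl⟩
  · have hcomp : FreeGroup.lift (Sum.elim (x ∘ Sum.inl) fun z : Fin k × ℕ =>
        HNNExtension.t ^ z.2 * x (Sum.inr z.1) * (HNNExtension.t ^ z.2)⁻¹) =
        HNNExtension.of.comp
          (FreeGroup.lift (Sum.elim a fun z : Fin k × ℕ => Θ^[z.2] (c z.1))) := by
      ext (i | z) <;> simp [x, t_pow_mul_of_mul_inv]
    rw [hcomp]
    exact (HNNExtension.of_injective _).comp hfree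

end AscendingHNN

end AscendingHNN

/-! ### Retracts and finite presentability -/

section Retract

variable {M E : Type*} [Group M] [Group E] {f : M →* E} {r : E →* M} {t : E}

theorem ker_eq_normalClosure_of_leftInverse (hrf : LeftInverse r f) (hrt : r t = 1)
    (htop : f.range ⊔ Subgroup.zpowers t = ⊤) : r.ker = Subgroup.normalClosure {t} := by
  set N := Subgroup.normalClosure {t}
  let π := QuotientGroup.mk' N
  have hfr : π.eqLocus (π.comp (f.comp r)) = ⊤ := by
    rw [eq_top_iff, ← htop, sup_le_iff, Subgroup.zpowers_le]
    refine ⟨?_, ?_⟩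
    · rintro _ ⟨x, rfl⟩
      exact congrArg (π ∘ f) (hrf x).symm
    · have ht : π t = 1 := (QuotientGroup.eq_one_iff t).2 (Subgroup.subset_normalClosure rfl)
      change π t = π (f (r t))
      rw [ht, hrt, map_one, map_one]
  apply le_antisymm
  · intro x hx
    have hπx : π x = π (f (r x)) := hfr.ge (Subgroup.mem_top x)
    rw [MonoidHom.mem_ker.1 hx, map_one, map_one] at hπx
    exact (QuotientGroup.eq_one_iff x).1 hπx
  · exact Subgroup.normalClosure_le_normal (Set.singleton_subset_iff.2 hrt)

theorem isFinitelyPresented_of_leftInverse [Group.IsFinitelyPresented E] (hrf : LeftInverse r f)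
    (hrt : r t = 1) (htop : f.range ⊔ Subgroup.zpowers t = ⊤) : Group.IsFinitelyPresented M :=
  Group.IsFinitelyPresented.of_surjective r hrf.surjective
    ⟨{t}, Set.finite_singleton t, (ker_eq_normalClosure_of_leftInverse hrf hrt htop).symm⟩

theorem isFinitelyPresented_of_map_sup_zpowers (hrf : LeftInverse r f) (hrt : r t = 1)
    {H : Subgroup M} (hH : Group.IsFinitelyPresented ↥(H.map f ⊔ Subgroup.zpowers t)) :
    Group.IsFinitelyPresented H := by
  set L := H.map f ⊔ Subgroup.zpowers t with hL
  have htL : t ∈ L := Subgroup.mem_sup_right (Subgroup.mem_zpowers t)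
  have hfL (x : H) : (f.comp H.subtype) x ∈ L := Subgroup.mem_sup_left ⟨x, x.2, rfl⟩
  have hrL : L ≤ H.comap r := by
    refine sup_le ?_ (Subgroup.zpowers_le.2 ?_)
    · rintro _ ⟨x, hx, rfl⟩
      rwa [Subgroup.mem_comap, hrf x]
    · rw [Subgroup.mem_comap, hrt]
      exact one_mem H
  refine isFinitelyPresented_of_leftInverse (f := (f.comp H.subtype).codRestrict L hfL)
    (r := (r.comp L.subtype).codRestrict H fun x => hrL x.2) (t := ⟨t, htL⟩)
    (fun x => Subtype.ext (hrf x)) (Subtype.ext hrt) ?_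
  apply Subgroup.map_injective L.subtype_injective
  have hcomp : L.subtype.comp ((f.comp H.subtype).codRestrict L hfL) = f.comp H.subtype := rfl
  rw [Subgroup.map_sup, MonoidHom.map_zpowers, MonoidHom.map_range, hcomp, MonoidHom.range_comp,
    H.range_subtype, ← MonoidHom.range_eq_map, L.range_subtype]
  exact hL.symm

theorem fg_map_sup_zpowers {H : Subgroup M} (hH : H.FG) (f : M →* E) (t : E) :
    (H.map f ⊔ Subgroup.zpowers t).FG := by
  obtain ⟨n, s, rfl⟩ := exists_fin_closure_eq hH
  rw [MonoidHom.map_closure, ← Set.range_comp, Subgroup.zpowers_eq_closure,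
    ← Subgroup.closure_union]
  exact (Subgroup.fg_iff _).2 ⟨_, rfl, (Set.finite_range _).union (Set.finite_singleton t)⟩

end Retract

/-! ### Mapping tori as retracts of ascending HNN extensions -/

section Torus

variable {I : Type} (J : Set I) (Ψ : freeFactor J →* FreeGroup I)

/-- The parametrization of the free factor by its basis `e_j`, `j ∈ J`. -/
def freeFactorBasis : FreeGroup J →* freeFactor J :=
  FreeGroup.lift fun j => ⟨FreeGroup.of (j : I),
    Subgroup.subset_closure (Set.mem_image_of_mem _ j.2)⟩

theorem injective_freeFactorBasis : Injective (freeFactorBasis J) := by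
  have hcomp : (freeFactor J).subtype.comp (freeFactorBasis J) = FreeGroup.map Subtype.val := by
    ext j
    simp [freeFactorBasis]
  refine Injective.of_comp (f := (freeFactor J).subtype) ?_
  rw [← MonoidHom.coe_comp, hcomp]
  exact FreeGroup.map_injective Subtype.val_injective

/-- The homomorphism `e_j ↦ s Ψ(e_j) s⁻¹`, where `s` is the new letter `none`. -/
def twist : FreeGroup J →* FreeGroup (Option I) :=
  (MulAut.conj (FreeGroup.of none)).toMonoidHom.comp
    ((FreeGroup.map some).comp (Ψ.comp (freeFactorBasis J)))

variable {J Ψ} in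
theorem injective_twist (hΨ : Injective Ψ) : Injective (twist J Ψ) :=
  (MulAut.conj (FreeGroup.of (none : Option I))).injective.comp
    ((FreeGroup.map_injective (Option.some_injective I)).comp
      (hΨ.comp (injective_freeFactorBasis J)))

/-- The letters of the free group carrying the endomorphism `theta`: the generators `eᵢ` and an
extra letter `s = none`, followed by countably many shifted copies `inr (y, n)` of each of them. -/
abbrev Letter (I : Type) : Type := Option I ⊕ Option I × ℕ

open Classical in
/-- The endomorphism sending `e_j` to `s Ψ(e_j) s⁻¹` for `j ∈ J` and every other letter to its next
shifted copy. Thanks to the conjugation by `s`, the stable letter `t` of the mapping torus can be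
recovered as `s⁻¹ τ`, where `τ` is the stable letter of the ascending HNN extension of `theta`;
this makes the mapping torus a retract by a map that kills `τ`. -/
noncomputable def theta : FreeGroup (Letter I) →* FreeGroup (Letter I) :=
  FreeGroup.lift fun
    | Sum.inl none => FreeGroup.of (Sum.inr (none, 0))
    | Sum.inl (some i) =>
      if h : i ∈ J then FreeGroup.map Sum.inl (twist J Ψ (FreeGroup.of ⟨i, h⟩))
      else FreeGroup.of (Sum.inr (some i, 0))
    | Sum.inr (y, n) => FreeGroup.of (Sum.inr (y, n + 1))

/-- The inverse of the shift of letters. -/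
def unshift : Option I × ℕ → Letter I
  | (y, 0) => Sum.inl y
  | (y, n + 1) => Sum.inr (y, n)

variable {J Ψ}

@[simp]
theorem theta_s : theta J Ψ (FreeGroup.of (Sum.inl none)) = FreeGroup.of (Sum.inr (none, 0)) := by
  simp [theta]

theorem theta_of_mem {i : I} (hi : i ∈ J) :
    theta J Ψ (FreeGroup.of (Sum.inl (some i))) =
      FreeGroup.map Sum.inl (twist J Ψ (FreeGroup.of ⟨i, hi⟩)) := by
  simp [theta, hi]

theorem theta_of_notMem {i : I} (hi : i ∉ J) :
    theta J Ψ (FreeGroup.of (Sum.inl (some i))) = FreeGroup.of (Sum.inr (some i, 0)) := by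
  simp [theta, hi]

@[simp]
theorem theta_shift (y : Option I) (n : ℕ) :
    theta J Ψ (FreeGroup.of (Sum.inr (y, n))) = FreeGroup.of (Sum.inr (y, n + 1)) := by
  simp [theta]

-- In the amalgam of `FreeGroup (Option I)` and `FreeGroup (Letter I)` along `FreeGroup J`, the map
-- that undoes the shift becomes a left inverse of `theta`.
theorem injective_theta (hΨ : Injective Ψ) : Injective (theta J Ψ) := by
  have hg : Injective (FreeGroup.map fun j : J => (Sum.inl (some (j : I)) : Letter I)) :=
    FreeGroup.map_injective fun x y h => by simpa [Subtype.ext_iff] using h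
  obtain ⟨P, _, i, j, -, hj, hij⟩ := exists_amalgam (injective_twist hΨ) hg
  let μ : FreeGroup (Letter I) →* P := FreeGroup.lift
    (Sum.elim (fun l => i (FreeGroup.of l)) fun p => j (FreeGroup.of (unshift p)))
  have hμ : μ.comp (FreeGroup.map Sum.inl) = i := by
    ext x
    simp [μ]
  have hμθ : μ.comp (theta J Ψ) = j := by
    ext ((_ | x) | ⟨x, n⟩)
    · simp [μ, unshift]
    · by_cases hx : x ∈ J
      · have hijx := DFunLike.congr_fun hij (FreeGroup.of ⟨x, hx⟩)
        rw [MonoidHom.comp_apply, MonoidHom.comp_apply, FreeGroup.map.of, ← hμ] at hijx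
        rw [MonoidHom.comp_apply, theta_of_mem hx, ← hijx, MonoidHom.comp_apply]
      · simp [theta_of_notMem hx, μ, unshift]
    · simp [μ, unshift]
  refine Injective.of_comp (f := μ) ?_
  rwa [← MonoidHom.coe_comp, hμθ]

variable (J Ψ) in
/-- The tautological map from the base group `FreeGroup I` to the mapping torus. -/
def torusBase : FreeGroup I →* MTRel J Ψ :=
  (PresentedGroup.mk _).comp (FreeGroup.map some)

theorem conj_torusBase {i : I} (hi : i ∈ J) :
    PresentedGroup.of none * PresentedGroup.of (some i) * (PresentedGroup.of none)⁻¹ =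
      torusBase J Ψ (Ψ (freeFactorBasis J (FreeGroup.of ⟨i, hi⟩))) := by
  have hone : PresentedGroup.mk (mtRelsRel J Ψ) _ = 1 :=
    PresentedGroup.one_of_mem (Set.mem_range_self (⟨i, hi⟩ : J))
  rw [map_mul, map_inv, mul_inv_eq_one, map_mul, map_mul, map_inv] at hone
  simpa only [freeFactorBasis, FreeGroup.lift_apply_of, PresentedGroup.of, torusBase,
    MonoidHom.comp_apply] using hone

variable (J Ψ) in
open Classical in
/-- The restriction to the free group of `retraction`: it sends `s` and its shifts to `t⁻¹`,
fixes the `eᵢ`, and sends the shifts of `eᵢ` to `eᵢ` if `i ∉ J`; the shifts of `eᵢ` with `i ∈ J`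
do not interact with `eᵢ` under `theta` and are sent to `1`. -/
noncomputable def baseRetraction : FreeGroup (Letter I) →* MTRel J Ψ :=
  FreeGroup.lift (Sum.elim
    (fun y => y.elim (PresentedGroup.of none)⁻¹ fun i => PresentedGroup.of (some i))
    fun p => p.1.elim (PresentedGroup.of none)⁻¹ fun i =>
      if i ∈ J then 1 else PresentedGroup.of (some i))

theorem baseRetraction_map_inl_map_some (v : FreeGroup I) :
    baseRetraction J Ψ (FreeGroup.map Sum.inl (FreeGroup.map some v)) = torusBase J Ψ v := by
  suffices (baseRetraction J Ψ).comp ((FreeGroup.map Sum.inl).comp (FreeGroup.map some)) =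
    torusBase J Ψ from DFunLike.congr_fun this v
  ext x
  simp [baseRetraction, torusBase, PresentedGroup.of]

theorem baseRetraction_comp_theta :
    (baseRetraction J Ψ).comp (theta J Ψ) = baseRetraction J Ψ := by
  ext ((_ | i) | ⟨y, n⟩)
  · simp [baseRetraction]
  · by_cases hi : i ∈ J
    · simp only [MonoidHom.comp_apply, theta_of_mem hi, twist, MulEquiv.toMonoidHom_eq_coe,
        MonoidHom.coe_coe, MulAut.conj_apply, map_mul, map_inv, FreeGroup.map.of,
        baseRetraction_map_inl_map_some, ← conj_torusBase hi]
      simp only [baseRetraction, FreeGroup.lift_apply_of, Sum.elim_inl, Option.elim]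
      group
    · simp [theta_of_notMem hi, baseRetraction, hi]
  · simp [baseRetraction]

variable (hΨ : Injective Ψ)

/-- The retraction of the ascending HNN extension of `theta` onto the mapping torus; it kills the
stable letter. -/
noncomputable def retraction : AscendingHNN (injective_theta hΨ) →* MTRel J Ψ :=
  HNNExtension.lift (baseRetraction J Ψ) 1 fun x => by
    rw [one_mul, mul_one]
    exact (DFunLike.congr_fun baseRetraction_comp_theta (x : FreeGroup (Letter I))).symm

/-- The images `t ↦ s⁻¹ τ` and `eᵢ ↦ eᵢ` of the generators under the section of `retraction`. -/
noncomputable def sectionLetter : Option I → AscendingHNN (injective_theta hΨ)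
  | none => (HNNExtension.of (FreeGroup.of (Sum.inl none)))⁻¹ * HNNExtension.t
  | some i => HNNExtension.of (FreeGroup.of (Sum.inl (some i)))

theorem lift_sectionLetter_map_some (v : FreeGroup I) :
    FreeGroup.lift (sectionLetter hΨ) (FreeGroup.map some v) =
      HNNExtension.of (FreeGroup.map Sum.inl (FreeGroup.map some v)) := by
  suffices (FreeGroup.lift (sectionLetter hΨ)).comp (FreeGroup.map some) =
    HNNExtension.of.comp ((FreeGroup.map Sum.inl).comp (FreeGroup.map some)) from
      DFunLike.congr_fun this v
  ext x
  simp [sectionLetter]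

theorem lift_sectionLetter_relator {x : FreeGroup (Option I)} (hx : x ∈ mtRelsRel J Ψ) :
    FreeGroup.lift (sectionLetter hΨ) x = 1 := by
  obtain ⟨j, rfl⟩ := hx
  have hconj := AscendingHNN.t_mul_of_mul_inv (injective_theta hΨ)
    (FreeGroup.of (Sum.inl (some (j : I))))
  simp only [theta_of_mem j.2, twist, freeFactorBasis, MonoidHom.comp_apply,
    MulEquiv.toMonoidHom_eq_coe, MonoidHom.coe_coe, MulAut.conj_apply, map_mul, map_inv,
    FreeGroup.map.of, FreeGroup.lift_apply_of] at hconj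
  simp only [map_mul, map_inv, lift_sectionLetter_map_some, FreeGroup.lift_apply_of,
    sectionLetter]
  rw [mul_inv_eq_one, mul_inv_rev, inv_inv, ← mul_assoc, mul_assoc _ HNNExtension.t,
    mul_assoc _ (_ * _) HNNExtension.t⁻¹, hconj]
  group

/-- The section `t ↦ s⁻¹ τ`, `eᵢ ↦ eᵢ` of `retraction`. -/
noncomputable def torusSection : MTRel J Ψ →* AscendingHNN (injective_theta hΨ) :=
  PresentedGroup.toGroup fun _ => lift_sectionLetter_relator hΨ

theorem leftInverse_retraction : LeftInverse (retraction hΨ) (torusSection hΨ) := by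
  suffices (retraction hΨ).comp (torusSection hΨ) = MonoidHom.id _ from DFunLike.congr_fun this
  ext (_ | i) <;>
    simp [torusSection, PresentedGroup.toGroup.of, sectionLetter, retraction, baseRetraction]

theorem retraction_t : retraction hΨ HNNExtension.t = 1 :=
  HNNExtension.lift_t _ _ _

end Torus

end MappingTorus

/-- Every finitely generated subgroup of `M(Ψ)` is finitely presented; that is,
`M(Ψ)` is coherent. -/
theorem mappingTorusRel_coherent {I : Type} (J : Set I) (Ψ : freeFactor J →* FreeGroup I)
    (hΨ : Function.Injective Ψ) (H : Subgroup (MTRel J Ψ)) (hH : H.FG) :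
    FinitelyPresented H := by
  have ht : HNNExtension.t ∈ H.map (MappingTorus.torusSection hΨ) ⊔
      Subgroup.zpowers HNNExtension.t :=
    Subgroup.mem_sup_right (Subgroup.mem_zpowers _)
  have hfp := MappingTorus.AscendingHNN.isFinitelyPresented_of_t_mem
    (MappingTorus.fg_map_sup_zpowers hH _ _) ht
  have := MappingTorus.isFinitelyPresented_of_map_sup_zpowers
    (MappingTorus.leftInverse_retraction hΨ) (MappingTorus.retraction_t hΨ) hfp
  obtain ⟨n, rels, hrels, ⟨e⟩⟩ :=
    Group.IsFinitelyPresented.exists_mulEquiv_presentedGroup (G := H)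
  exact ⟨n, rels, hrels, ⟨e.symm⟩⟩
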